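/- arXiv:1808.04484 — 5 statements merged into one kernel-verified Lean document; each statement's English description precedes it below -/
import Mathlib

section
/- Let 𝒢 = (G,p,θ,τ) be a well-positioned Γ-symmetric bar-joint framework in X. Then: (G,p) is full if and only if 𝒢 is χ-symmetrically full for every χ ∈ Γ̂; (G,p) is infinitesimally rigid if and only if 𝒢 is χ-symmetrically infinitesimally rigid for every χ ∈ Γ̂; (G,p) is independent if and only if 𝒢 is χ-symmetrically independent for every χ ∈ Γ̂; and (G,p) is isostatic if and only if 𝒢 is χ-symmetrically isostatic for every χ ∈ Γ̂. -/
/-!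
Statement 4 (Corollary 2.9 / lem:SymRigid): a well-positioned `Γ`-symmetric framework
is full (resp. infinitesimally rigid, independent, isostatic) iff it is
`χ`-symmetrically full (resp. rigid, independent, isostatic) for every character `χ`.
-/

open scoped TensorProduct

namespace Stmt4

variable {V : Type} [Fintype V] [DecidableEq V]
variable {X : Type} [NormedAddCommGroup X] [NormedSpace ℝ X]
variable {Γ : Type} [CommGroup Γ] [Fintype Γ]

noncomputable def fG (G : SimpleGraph V) [Fintype G.edgeSet] (x : V → X) (e : G.edgeSet) : ℝ :=
  Sym2.lift ⟨fun v w => ‖x v - x w‖, fun v w => by simp only []; rw [norm_sub_rev]⟩ e.1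

noncomputable def WellPositioned (G : SimpleGraph V) [Fintype G.edgeSet] (p : V → X) : Prop :=
  DifferentiableAt ℝ (fG G) p

noncomputable def dfR (G : SimpleGraph V) [Fintype G.edgeSet] (p : V → X) :
    (V → X) →L[ℝ] (G.edgeSet → ℝ) :=
  fderiv ℝ (fG G) p

noncomputable def phiEdge (G : SimpleGraph V) [Fintype G.edgeSet] (p : V → X)
    (e : G.edgeSet) (v : V) : X →ₗ[ℝ] ℝ :=
  (LinearMap.proj (R := ℝ) (φ := fun _ : G.edgeSet => ℝ) e).comp
    ((dfR G p).toLinearMap.comp (LinearMap.single ℝ (fun _ : V => X) v))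

noncomputable def cplxFunctional (f : X →ₗ[ℝ] ℝ) : (ℂ ⊗[ℝ] X) →ₗ[ℂ] ℂ :=
  LinearMap.liftBaseChange ℂ ((Complex.ofRealCLM.toLinearMap).comp f)

/-- The complex-linear extension of `df_G(p)`. -/
noncomputable def dfC (G : SimpleGraph V) [Fintype G.edgeSet] (p : V → X) :
    (V → ℂ ⊗[ℝ] X) →ₗ[ℂ] (G.edgeSet → ℂ) :=
  LinearMap.pi fun e : G.edgeSet =>
    ∑ v : V, (cplxFunctional (phiEdge G p e v)).comp
      (LinearMap.proj (R := ℂ) (φ := fun _ : V => ℂ ⊗[ℝ] X) v)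

def edgeAct (G : SimpleGraph V) (θ : Γ →* Equiv.Perm V)
    (hadj : ∀ (γ : Γ) (u v : V), G.Adj u v ↔ G.Adj (θ γ u) (θ γ v))
    (γ : Γ) (e : G.edgeSet) : G.edgeSet :=
  ⟨Sym2.map (θ γ) e.1, by
    obtain ⟨e, he⟩ := e
    induction e using Sym2.ind with
    | _ u v => simpa using (hadj γ u v).1 (by simpa using he)⟩

noncomputable def tauC (τ : Γ →* (X ≃ₗᵢ[ℝ] X)) (γ : Γ) :
    (ℂ ⊗[ℝ] X) →ₗ[ℂ] (ℂ ⊗[ℝ] X) :=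
  LinearMap.baseChange ℂ ((τ γ).toLinearEquiv.toLinearMap)

noncomputable def Xchi (θ : Γ →* Equiv.Perm V) (τ : Γ →* (X ≃ₗᵢ[ℝ] X)) (χ : Γ →* ℂ) :
    Submodule ℂ (V → ℂ ⊗[ℝ] X) :=
  ⨅ (γ : Γ), ⨅ (v : V),
    LinearMap.ker
      ((LinearMap.proj (R := ℂ) (φ := fun _ : V => ℂ ⊗[ℝ] X) (θ γ v)) -
        χ γ • ((tauC τ γ).comp (LinearMap.proj (R := ℂ) (φ := fun _ : V => ℂ ⊗[ℝ] X) v)))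

noncomputable def Ychi (G : SimpleGraph V) (θ : Γ →* Equiv.Perm V)
    (hadj : ∀ (γ : Γ) (u v : V), G.Adj u v ↔ G.Adj (θ γ u) (θ γ v)) (χ : Γ →* ℂ) :
    Submodule ℂ (G.edgeSet → ℂ) :=
  ⨅ (γ : Γ), ⨅ (e : G.edgeSet),
    LinearMap.ker
      ((LinearMap.proj (R := ℂ) (φ := fun _ : G.edgeSet => ℂ) (edgeAct G θ hadj γ e)) -
        χ γ • (LinearMap.proj (R := ℂ) (φ := fun _ : G.edgeSet => ℂ) e))

def IsRigidMotion (α : X → ℝ → X) : Prop :=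
  (∀ x : X, ContinuousOn (α x) (Set.Icc (-1 : ℝ) 1)) ∧
    (∀ x : X, α x 0 = x) ∧
    (∀ x y : X, ∀ t ∈ Set.Icc (-1 : ℝ) 1, ‖α x t - α y t‖ = ‖x - y‖)

def IsInfRigidMotion (η : X → X) : Prop :=
  ∃ α : X → ℝ → X, IsRigidMotion α ∧ ∀ x : X, HasDerivAt (α x) (η x) 0

noncomputable def TXC (X : Type) [NormedAddCommGroup X] [NormedSpace ℝ X] :
    Submodule ℂ (X → ℂ ⊗[ℝ] X) :=
  Submodule.span ℂ
    {η' | ∃ η : X → X, IsInfRigidMotion η ∧ η' = fun x => (1 : ℂ) ⊗ₜ[ℝ] η x}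

noncomputable def Tchi (τ : Γ →* (X ≃ₗᵢ[ℝ] X)) (χ : Γ →* ℂ) :
    Submodule ℂ (X → ℂ ⊗[ℝ] X) :=
  TXC X ⊓
    ⨅ (γ : Γ), ⨅ (x : X),
      LinearMap.ker
        ((LinearMap.proj (R := ℂ) (φ := fun _ : X => ℂ ⊗[ℝ] X) (τ γ x)) -
          χ γ • ((tauC τ γ).comp (LinearMap.proj (R := ℂ) (φ := fun _ : X => ℂ ⊗[ℝ] X) x)))

/-- The complexified restriction map `ρ_{(G,p)} : 𝒯(X;ℂ) → (X_ℂ)^V`. -/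
noncomputable def rhoC (p : V → X) : (X → ℂ ⊗[ℝ] X) →ₗ[ℂ] (V → ℂ ⊗[ℝ] X) :=
  LinearMap.pi fun v : V => LinearMap.proj (R := ℂ) (φ := fun _ : X => ℂ ⊗[ℝ] X) (p v)

/-- Exactness of the (real) framework complex at `𝒯(X)`. -/
def Full (G : SimpleGraph V) [Fintype G.edgeSet] (p : V → X) : Prop :=
  ∀ η : X → X, IsInfRigidMotion η → (∀ v : V, η (p v) = 0) → η = fun _ => 0

/-- Exactness of the (real) framework complex at `X^V`. -/
noncomputable def InfRigid (G : SimpleGraph V) [Fintype G.edgeSet] (p : V → X) : Prop :=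
  ∀ u : V → X, dfR G p u = 0 → ∃ η : X → X, IsInfRigidMotion η ∧ ∀ v : V, η (p v) = u v

/-- Exactness of the (real) framework complex at `ℝ^E`. -/
noncomputable def Independent (G : SimpleGraph V) [Fintype G.edgeSet] (p : V → X) : Prop :=
  Function.Surjective (dfR G p)

noncomputable def Isostatic (G : SimpleGraph V) [Fintype G.edgeSet] (p : V → X) : Prop :=
  InfRigid G p ∧ Independent G p

/-- `χ`-symmetrically full: `ρ_χ(𝒢)` is injective. -/
noncomputable def ChiFull (G : SimpleGraph V) [Fintype G.edgeSet] (p : V → X)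
    (τ : Γ →* (X ≃ₗᵢ[ℝ] X)) (χ : Γ →* ℂ) : Prop :=
  ∀ η ∈ Tchi τ χ, rhoC (V := V) p η = 0 → η = 0

/-- `χ`-symmetrically infinitesimally rigid: `ker R_χ(𝒢) ⊆ im ρ_χ(𝒢)`. -/
noncomputable def ChiRigid (G : SimpleGraph V) [Fintype G.edgeSet] (p : V → X)
    (θ : Γ →* Equiv.Perm V) (τ : Γ →* (X ≃ₗᵢ[ℝ] X)) (χ : Γ →* ℂ) : Prop :=
  ∀ u ∈ Xchi θ τ χ, dfC G p u = 0 → ∃ η ∈ Tchi τ χ, rhoC (V := V) p η = u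

/-- `χ`-symmetrically independent: `R_χ(𝒢)` is surjective onto `Y_χ`. -/
noncomputable def ChiIndependent (G : SimpleGraph V) [Fintype G.edgeSet] (p : V → X)
    (θ : Γ →* Equiv.Perm V)
    (hadj : ∀ (γ : Γ) (u v : V), G.Adj u v ↔ G.Adj (θ γ u) (θ γ v))
    (τ : Γ →* (X ≃ₗᵢ[ℝ] X)) (χ : Γ →* ℂ) : Prop :=
  ∀ y ∈ Ychi G θ hadj χ, ∃ u ∈ Xchi θ τ χ, dfC G p u = y

noncomputable def ChiIsostatic (G : SimpleGraph V) [Fintype G.edgeSet] (p : V → X)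
    (θ : Γ →* Equiv.Perm V)
    (hadj : ∀ (γ : Γ) (u v : V), G.Adj u v ↔ G.Adj (θ γ u) (θ γ v))
    (τ : Γ →* (X ≃ₗᵢ[ℝ] X)) (χ : Γ →* ℂ) : Prop :=
  ChiRigid G p θ τ χ ∧ ChiIndependent G p θ hadj τ χ

/-- A distance-preserving self-map of a finite-dimensional normed space is onto. -/
theorem surjective_of_norm_sub_eq [FiniteDimensional ℝ X] {f : X → X}
    (hf : ∀ x y, ‖f x - f y‖ = ‖x - y‖) : Function.Surjective f := by
  have : ProperSpace X := FiniteDimensional.proper ℝ X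
  set g : X → X := fun x => f x - f 0 with hg
  have hgi : Isometry g := Isometry.of_dist_eq fun x y => by
    simp only [hg, dist_eq_norm, sub_sub_sub_cancel_right, hf]
  have hg_norm : ∀ x, ‖g x‖ = ‖x‖ := fun x => by simp only [hg, hf, sub_zero]
  suffices Function.Surjective g by
    intro y
    obtain ⟨x, hx⟩ := this (y - f 0)
    exact ⟨x, sub_left_injective hx⟩
  intro y
  have hcl : IsClosed (Set.range g) := hgi.isClosedEmbedding.isClosed_range
  by_contra! hy
  have hymem : y ∈ (Set.range g)ᶜ := by rintro ⟨x, hx⟩; exact hy x hx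
  obtain ⟨ε, hε, hball⟩ := Metric.isOpen_iff.1 hcl.isOpen_compl y hymem
  have hfar : ∀ x, ε ≤ dist (g x) y := fun x => by
    by_contra! h
    exact hball (Metric.mem_ball.2 h) ⟨x, rfl⟩
  have hiter : ∀ n, ‖g^[n] y‖ = ‖y‖ := fun n => by
    induction n with
    | zero => rfl
    | succ n ih => rw [Function.iterate_succ_apply', hg_norm, ih]
  have hgi_iter : ∀ n, Isometry g^[n] := fun n => by
    induction n with
    | zero => exact isometry_id
    | succ n ih => exact ih.comp hgi
  have hsep : ∀ m k, ε ≤ dist (g^[m + (k + 1)] y) (g^[m] y) := fun m k => by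
    rw [Function.iterate_add_apply, (hgi_iter m).dist_eq, Function.iterate_succ_apply']
    exact hfar _
  obtain ⟨a, -, φ, hφ, hlim⟩ := (isCompact_closedBall (0 : X) ‖y‖).tendsto_subseq
    (x := fun n => g^[n] y) fun n => by simp [hiter]
  obtain ⟨N, hN⟩ := Metric.cauchySeq_iff'.1 hlim.cauchySeq ε hε
  have hlt : φ N < φ (N + 1) := hφ (Nat.lt_succ_self N)
  obtain ⟨k, hk⟩ := Nat.exists_eq_add_of_lt hlt
  have h := hN (N + 1) (Nat.le_succ N)
  simp only [Function.comp_apply, hk] at h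
  exact absurd (hsep (φ N) k) (not_le.2 h)

/-- A distance-preserving self-map of a finite-dimensional normed space is affine. -/
theorem exists_linearIsometry_of_norm_sub_eq [FiniteDimensional ℝ X] {f : X → X}
    (hf : ∀ x y, ‖f x - f y‖ = ‖x - y‖) :
    ∃ A : X →ₗᵢ[ℝ] X, ∀ x y, f x - f y = A (x - y) := by
  have hiso : Isometry f := Isometry.of_dist_eq fun x y => by simp only [dist_eq_norm, hf]
  let e : X ≃ᵢ X :=
    IsometryEquiv.mk (Equiv.ofBijective f ⟨hiso.injective, surjective_of_norm_sub_eq hf⟩) hiso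
  refine ⟨e.toRealLinearIsometryEquiv.toLinearIsometry, fun x y => ?_⟩
  have h : ∀ z, e z = f z := fun _ => rfl
  simp [map_sub, h]

theorem IsInfRigidMotion.zero : IsInfRigidMotion (fun _ : X => (0 : X)) :=
  ⟨fun x _ => x, ⟨fun _ => continuousOn_const, fun _ => rfl, fun _ _ _ _ => rfl⟩,
    fun x => hasDerivAt_const 0 x⟩

theorem IsInfRigidMotion.smul {η : X → X} (hη : IsInfRigidMotion η) (c : ℝ) :
    IsInfRigidMotion (fun x => c • η x) := by
  obtain ⟨α, ⟨hc, h0, hn⟩, hd⟩ := hη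
  let s : ℝ → ℝ := fun t => max (-1) (min 1 (c * t))
  have hs : Continuous s := by fun_prop
  have hs_mem : ∀ t, s t ∈ Set.Icc (-1 : ℝ) 1 := fun t =>
    ⟨le_max_left _ _, max_le (by norm_num) (min_le_left _ _)⟩
  have hs_zero : s 0 = 0 := by simp [s]
  have hs_eq : s =ᶠ[nhds 0] fun t => c * t := by
    have hnear : ∀ᶠ t in nhds (0 : ℝ), c * t ∈ Set.Icc (-1 : ℝ) 1 := by
      apply ContinuousAt.eventually_mem (by fun_prop)
      simp
    filter_upwards [hnear] with t ht
    simp only [s, min_eq_right ht.2, max_eq_right ht.1]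
  have hs_deriv : HasDerivAt s c 0 := by
    have h : HasDerivAt (fun t : ℝ => c * t) c 0 := by
      simpa using (hasDerivAt_id (0 : ℝ)).const_mul c
    exact h.congr_of_eventuallyEq hs_eq
  refine ⟨fun x t => α x (s t), ⟨fun x => ?_, fun x => ?_, fun x y t _ => hn x y _ (hs_mem t)⟩,
    fun x => ?_⟩
  · exact (hc x).comp hs.continuousOn fun t _ => hs_mem t
  · simp only [hs_zero, h0]
  · have h := hd x
    rw [← hs_zero] at h
    exact h.scomp 0 hs_deriv

open Topology Asymptotics in
theorem IsInfRigidMotion.add [FiniteDimensional ℝ X] {η ζ : X → X} (hη : IsInfRigidMotion η)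
    (hζ : IsInfRigidMotion ζ) : IsInfRigidMotion (fun x => η x + ζ x) := by
  obtain ⟨α, ⟨hαc, hα0, hαn⟩, hαd⟩ := hη
  obtain ⟨β, ⟨hβc, hβ0, hβn⟩, hβd⟩ := hζ
  refine ⟨fun x t => α (β x t) t, ⟨fun x => ?_, fun x => ?_, fun x y t ht => ?_⟩, fun x => ?_⟩
  · intro t₀ ht₀
    have h1 := tendsto_iff_norm_sub_tendsto_zero.1 (hαc (β x t₀) t₀ ht₀)
    have h2 := tendsto_iff_norm_sub_tendsto_zero.1 (hβc x t₀ ht₀)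
    have h3 := h2.add h1
    rw [add_zero] at h3
    refine tendsto_iff_norm_sub_tendsto_zero.2 (squeeze_zero' (.of_forall fun _ => norm_nonneg _)
      ?_ h3)
    filter_upwards [self_mem_nhdsWithin] with t ht
    rw [← hαn (β x t) (β x t₀) t ht]
    exact norm_sub_le_norm_sub_add_norm_sub ..
  · simp only [hβ0, hα0]
  · simp only [hαn _ _ t ht, hβn _ _ t ht]
  · have hα := (hαd x).isLittleO
    have hβ := (hβd x).isLittleO
    simp only [sub_zero, hα0, hβ0] at hα hβ
    have hlim : (fun t => α (x + ζ x) t - α x t - ζ x) =o[𝓝 0] fun _ => (1 : ℝ) := by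
      rw [isLittleO_one_iff]
      have h : Filter.Tendsto (fun t => α (x + ζ x) t - α x t - ζ x) (𝓝 0)
          (𝓝 (α (x + ζ x) 0 - α x 0 - ζ x)) :=
        ((hαd (x + ζ x)).continuousAt.sub (hαd x).continuousAt).sub tendsto_const_nhds
      simpa [hα0] using h
    have hsm : (fun t : ℝ => t • (α (x + ζ x) t - α x t - ζ x)) =o[𝓝 0] fun t => t := by
      simpa using (isBigO_refl (fun t : ℝ => t) (𝓝 0)).smul_isLittleO hlim
    have hmix : (fun t => α (β x t) t - α x t - t • ζ x) =o[𝓝 0] fun t => t := by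
      refine IsBigO.trans_isLittleO (IsBigO.of_bound 1 ?_) (hβ.norm_left.add hsm.norm_left)
      filter_upwards [Icc_mem_nhds (by norm_num : (-1 : ℝ) < 0) one_pos] with t ht
      obtain ⟨A, hA⟩ := exists_linearIsometry_of_norm_sub_eq
        (f := fun y => α y t) fun y z => hαn y z t ht
      have hsplit : α (β x t) t - α x t - t • ζ x
          = A (β x t - x - t • ζ x) + t • (α (x + ζ x) t - α x t - ζ x) := by
        rw [hA (β x t) x, hA (x + ζ x) x, add_sub_cancel_left, map_sub A (β x t - x), map_smul,
          smul_sub]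
        abel
      rw [hsplit, one_mul, Real.norm_of_nonneg (by positivity)]
      exact (norm_add_le _ _).trans_eq (by rw [A.norm_map])
    refine HasDerivAt.of_isLittleO ?_
    simp only [sub_zero, hα0, hβ0]
    refine (hα.add hmix).congr_left fun t => ?_
    rw [smul_add]
    abel

theorem IsInfRigidMotion.conj {η : X → X} (hη : IsInfRigidMotion η) (T : X ≃ₗᵢ[ℝ] X) :
    IsInfRigidMotion (fun x => T.symm (η (T x))) := by
  obtain ⟨α, ⟨hc, h0, hn⟩, hd⟩ := hη
  refine ⟨fun x t => T.symm (α (T x) t), ⟨fun x => ?_, fun x => ?_, fun x y t ht => ?_⟩,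
    fun x => ?_⟩
  · exact T.symm.continuous.comp_continuousOn (hc _)
  · simp only [h0, T.symm_apply_apply]
  · rw [← map_sub, T.symm.norm_map, hn _ _ t ht, ← map_sub, T.norm_map]
  · exact T.symm.toContinuousLinearEquiv.toContinuousLinearMap.hasFDerivAt.comp_hasDerivAt 0
      (hd (T x))

/-- The real part `ℂ ⊗ X → X`. -/
noncomputable def tensorRe : (ℂ ⊗[ℝ] X) →ₗ[ℝ] X :=
  (TensorProduct.lid ℝ X).toLinearMap.comp (LinearMap.rTensor X Complex.reLm)

/-- The imaginary part `ℂ ⊗ X → X`. -/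
noncomputable def tensorIm : (ℂ ⊗[ℝ] X) →ₗ[ℝ] X :=
  (TensorProduct.lid ℝ X).toLinearMap.comp (LinearMap.rTensor X Complex.imLm)

@[simp]
theorem tensorRe_tmul (c : ℂ) (x : X) : tensorRe (c ⊗ₜ[ℝ] x) = c.re • x := by
  simp [tensorRe]

@[simp]
theorem tensorIm_tmul (c : ℂ) (x : X) : tensorIm (c ⊗ₜ[ℝ] x) = c.im • x := by
  simp [tensorIm]

theorem one_tmul_re_add_I_smul_im (z : ℂ ⊗[ℝ] X) :
    (1 : ℂ) ⊗ₜ[ℝ] tensorRe z + Complex.I • ((1 : ℂ) ⊗ₜ[ℝ] tensorIm z) = z := by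
  induction z with
  | zero => simp
  | tmul c x =>
    rw [tensorRe_tmul, tensorIm_tmul, ← TensorProduct.smul_tmul, ← TensorProduct.smul_tmul,
      TensorProduct.smul_tmul', ← TensorProduct.add_tmul]
    congr 1
    apply Complex.ext <;> simp
  | add a b ha hb =>
    conv_rhs => rw [← ha, ← hb]
    simp only [map_add, TensorProduct.tmul_add, smul_add]
    abel

theorem tensorRe_I_smul (z : ℂ ⊗[ℝ] X) : tensorRe (Complex.I • z) = -tensorIm z := by
  induction z with
  | zero => simp
  | tmul c x => simp [TensorProduct.smul_tmul']
  | add a b ha hb => simp only [smul_add, map_add, ha, hb, neg_add]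

theorem isInfRigidMotion_tensorRe [FiniteDimensional ℝ X] {η : X → ℂ ⊗[ℝ] X} (hη : η ∈ TXC X) :
    IsInfRigidMotion (fun x => tensorRe (η x)) := by
  suffices ∀ c : ℂ, IsInfRigidMotion (fun x => tensorRe (c • η x)) by simpa using this 1
  induction hη using Submodule.span_induction with
  | mem η h =>
    obtain ⟨ζ, hζ, rfl⟩ := h
    intro c
    simpa [TensorProduct.smul_tmul'] using hζ.smul c.re
  | zero =>
    intro c
    simpa using IsInfRigidMotion.zero (X := X)
  | add η ζ _ _ h₁ h₂ =>
    intro c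
    simpa [smul_add] using (h₁ c).add (h₂ c)
  | smul a η _ h =>
    intro c
    simpa [smul_smul] using h (c * a)

theorem isInfRigidMotion_tensorIm [FiniteDimensional ℝ X] {η : X → ℂ ⊗[ℝ] X} (hη : η ∈ TXC X) :
    IsInfRigidMotion (fun x => tensorIm (η x)) := by
  simpa [tensorRe_I_smul] using
    isInfRigidMotion_tensorRe ((TXC X).smul_mem (-Complex.I) hη)

theorem one_tmul_mem_TXC {η : X → X} (hη : IsInfRigidMotion η) :
    (fun x => (1 : ℂ) ⊗ₜ[ℝ] η x) ∈ TXC X :=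
  Submodule.subset_span ⟨η, hη, rfl⟩

theorem dfR_apply_eq_sum (G : SimpleGraph V) [Fintype G.edgeSet] (p u : V → X) (e : G.edgeSet) :
    dfR G p u e = ∑ v, phiEdge G p e v (u v) := by
  conv_lhs => rw [← Finset.univ_sum_single u]
  simp [phiEdge, map_sum]

theorem dfC_one_tmul (G : SimpleGraph V) [Fintype G.edgeSet] (p u : V → X) (e : G.edgeSet) :
    dfC G p (fun v => (1 : ℂ) ⊗ₜ[ℝ] u v) e = (dfR G p u e : ℂ) := by
  rw [dfR_apply_eq_sum]
  simp [dfC, cplxFunctional]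

theorem dfC_apply (G : SimpleGraph V) [Fintype G.edgeSet] (p : V → X) (u : V → ℂ ⊗[ℝ] X)
    (e : G.edgeSet) :
    dfC G p u e = (dfR G p (fun v => tensorRe (u v)) e : ℂ)
      + Complex.I * (dfR G p (fun v => tensorIm (u v)) e : ℂ) := by
  have hu : u = (fun v => (1 : ℂ) ⊗ₜ[ℝ] tensorRe (u v))
      + Complex.I • (fun v => (1 : ℂ) ⊗ₜ[ℝ] tensorIm (u v)) :=
    funext fun v => (one_tmul_re_add_I_smul_im (u v)).symm
  conv_lhs => rw [hu]
  rw [map_add, map_smul, Pi.add_apply, Pi.smul_apply, dfC_one_tmul, dfC_one_tmul, smul_eq_mul]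

theorem dfC_eq_zero_iff (G : SimpleGraph V) [Fintype G.edgeSet] (p : V → X)
    (u : V → ℂ ⊗[ℝ] X) :
    dfC G p u = 0 ↔ dfR G p (fun v => tensorRe (u v)) = 0 ∧
      dfR G p (fun v => tensorIm (u v)) = 0 := by
  simp only [funext_iff, dfC_apply, Complex.ext_iff, ← forall_and]
  simp

/-- Fullness of a framework in terms of the complexified framework complex. -/
theorem full_iff_complex [FiniteDimensional ℝ X] (G : SimpleGraph V) [Fintype G.edgeSet]
    (p : V → X) :
    Full G p ↔ ∀ η ∈ TXC X, rhoC (V := V) p η = 0 → η = 0 := by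
  constructor
  · intro h η hη h0
    have h0' : ∀ v, η (p v) = 0 := fun v => congrFun h0 v
    have hre := h _ (isInfRigidMotion_tensorRe hη) fun v => by simp [h0']
    have him := h _ (isInfRigidMotion_tensorIm hη) fun v => by simp [h0']
    ext1 x
    rw [← one_tmul_re_add_I_smul_im (η x), congrFun hre x, congrFun him x]
    simp
  · intro h η hη h0
    have h1 := h _ (one_tmul_mem_TXC hη) (funext fun v => by simp [rhoC, h0])
    funext x
    simpa using congrArg tensorRe (congrFun h1 x)

/-- Infinitesimal rigidity of a framework in terms of the complexified framework complex. -/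
theorem infRigid_iff_complex [FiniteDimensional ℝ X] (G : SimpleGraph V) [Fintype G.edgeSet]
    (p : V → X) :
    InfRigid G p ↔ ∀ u, dfC G p u = 0 → ∃ η ∈ TXC X, rhoC (V := V) p η = u := by
  constructor
  · intro h u hu
    obtain ⟨hre, him⟩ := (dfC_eq_zero_iff G p u).1 hu
    obtain ⟨η, hη, hηu⟩ := h _ hre
    obtain ⟨ζ, hζ, hζu⟩ := h _ him
    refine ⟨_, (TXC X).add_mem (one_tmul_mem_TXC hη)
      ((TXC X).smul_mem Complex.I (one_tmul_mem_TXC hζ)), funext fun v => ?_⟩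
    rw [← one_tmul_re_add_I_smul_im (u v), ← hηu, ← hζu]
    rfl
  · intro h u hu
    obtain ⟨η, hη, hηu⟩ := h (fun v => (1 : ℂ) ⊗ₜ[ℝ] u v)
      (funext fun e => by rw [dfC_one_tmul, hu]; simp)
    refine ⟨_, isInfRigidMotion_tensorRe hη, fun v => ?_⟩
    simpa [rhoC] using congrArg tensorRe (congrFun hηu v)

/-- Independence of a framework in terms of the complexified framework complex. -/
theorem independent_iff_complex (G : SimpleGraph V) [Fintype G.edgeSet] (p : V → X) :
    Independent G p ↔ Function.Surjective (dfC G p) := by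
  constructor
  · intro h y
    obtain ⟨a, ha⟩ := h fun e => (y e).re
    obtain ⟨b, hb⟩ := h fun e => (y e).im
    refine ⟨fun v => (1 : ℂ) ⊗ₜ[ℝ] a v + Complex.I • ((1 : ℂ) ⊗ₜ[ℝ] b v), funext fun e => ?_⟩
    rw [dfC_apply]
    simp only [map_add, tensorRe_tmul, tensorIm_tmul, TensorProduct.smul_tmul']
    simp [ha, hb, mul_comm Complex.I, Complex.re_add_im]
  · intro h y
    obtain ⟨u, hu⟩ := h fun e => (y e : ℂ)
    refine ⟨fun v => tensorRe (u v), funext fun e => ?_⟩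
    have h1 := congrArg Complex.re (congrFun hu e)
    rw [dfC_apply] at h1
    simpa using h1

section Isotypic

variable {M N : Type*} [AddCommGroup M] [Module ℂ M] [AddCommGroup N] [Module ℂ N]

/-- The projection of a representation of a finite abelian group onto its `χ`-isotypic part. -/
noncomputable def isotypicProj (ρ : Representation ℂ Γ M) (χ : Γ →* ℂ) : M →ₗ[ℂ] M :=
  (Fintype.card Γ : ℂ)⁻¹ • ∑ γ : Γ, χ γ⁻¹ • ρ γ

theorem isotypicProj_apply (ρ : Representation ℂ Γ M) (χ : Γ →* ℂ) (m : M) :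
    isotypicProj ρ χ m = (Fintype.card Γ : ℂ)⁻¹ • ∑ γ : Γ, χ γ⁻¹ • ρ γ m := by
  simp [isotypicProj, LinearMap.sum_apply]

theorem map_mul_map_inv_eq_one (χ : Γ →* ℂ) (γ : Γ) : χ γ * χ γ⁻¹ = 1 := by
  rw [← map_mul, mul_inv_cancel, map_one]

theorem rho_isotypicProj (ρ : Representation ℂ Γ M) (χ : Γ →* ℂ) (γ : Γ) (m : M) :
    ρ γ (isotypicProj ρ χ m) = χ γ • isotypicProj ρ χ m := by
  rw [isotypicProj_apply, map_smul, map_sum, smul_comm (χ γ), Finset.smul_sum (r := χ γ)]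
  congr 1
  refine Fintype.sum_equiv (Equiv.mulLeft γ) _ _ fun δ => ?_
  rw [Equiv.coe_mulLeft, map_smul (ρ γ), ← Module.End.mul_apply, ← map_mul, smul_smul, mul_inv, map_mul χ,
    ← mul_assoc, map_mul_map_inv_eq_one, one_mul]

theorem isotypicProj_eq_self {ρ : Representation ℂ Γ M} {χ : Γ →* ℂ} {m : M}
    (h : ∀ γ, ρ γ m = χ γ • m) : isotypicProj ρ χ m = m := by
  have hcard : (Fintype.card Γ : ℂ) ≠ 0 := Nat.cast_ne_zero.2 Fintype.card_ne_zero
  have hterm : ∀ γ, χ γ⁻¹ • ρ γ m = m := fun γ => by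
    rw [h, smul_smul, mul_comm, map_mul_map_inv_eq_one, one_smul]
  rw [isotypicProj_apply, Finset.sum_congr rfl fun γ _ => hterm γ, Finset.sum_const,
    Finset.card_univ, ← Nat.cast_smul_eq_nsmul ℂ, smul_smul, inv_mul_cancel₀ hcard, one_smul]

theorem map_isotypicProj {ρ : Representation ℂ Γ M} {σ : Representation ℂ Γ N} {f : M →ₗ[ℂ] N}
    (h : ∀ γ m, f (ρ γ m) = σ γ (f m)) (χ : Γ →* ℂ) (m : M) :
    f (isotypicProj ρ χ m) = isotypicProj σ χ (f m) := by
  simp only [isotypicProj_apply, map_smul, map_sum, h]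

theorem isotypicProj_mem {ρ : Representation ℂ Γ M} {S : Submodule ℂ M}
    (h : ∀ γ, ∀ m ∈ S, ρ γ m ∈ S) (χ : Γ →* ℂ) {m : M} (hm : m ∈ S) :
    isotypicProj ρ χ m ∈ S := by
  rw [isotypicProj_apply]
  exact S.smul_mem _ (S.sum_mem fun γ _ => S.smul_mem _ (h γ m hm))

/-- The multiplicative form of a character of `Additive Γ`. -/
def charHom (ψ : AddChar (Additive Γ) ℂ) : Γ →* ℂ where
  toFun γ := ψ (Additive.ofMul γ)
  map_one' := ψ.map_zero_eq_one
  map_mul' _ _ := ψ.map_add_eq_mul _ _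

theorem sum_isotypicProj (ρ : Representation ℂ Γ M) (m : M) :
    ∑ ψ : AddChar (Additive Γ) ℂ, isotypicProj ρ (charHom ψ) m = m := by
  classical
  have hcard : (Fintype.card Γ : ℂ) ≠ 0 := Nat.cast_ne_zero.2 Fintype.card_ne_zero
  have horth : ∀ γ : Γ, ∑ ψ : AddChar (Additive Γ) ℂ, charHom ψ γ⁻¹
      = if γ = 1 then (Fintype.card Γ : ℂ) else 0 := fun γ => by
    have h := AddChar.sum_apply_eq_ite (Additive.ofMul γ⁻¹)
    rw [Fintype.card_congr Additive.toMul] at h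
    refine h.trans (if_congr ?_ rfl rfl)
    rw [ofMul_eq_zero, inv_eq_one]
  simp only [isotypicProj_apply]
  rw [← Finset.smul_sum, Finset.sum_comm]
  simp only [← Finset.sum_smul, horth, ite_smul, zero_smul]
  rw [Finset.sum_ite_eq' Finset.univ (1 : Γ), if_pos (Finset.mem_univ _), smul_smul,
    inv_mul_cancel₀ hcard, one_smul, map_one, Module.End.one_apply]

end Isotypic

theorem tauC_mul (τ : Γ →* (X ≃ₗᵢ[ℝ] X)) (γ δ : Γ) (z : ℂ ⊗[ℝ] X) :
    tauC τ (γ * δ) z = tauC τ γ (tauC τ δ z) := by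
  induction z with
  | zero => simp
  | tmul c x => simp [tauC, map_mul]
  | add a b ha hb => simp only [map_add, ha, hb]

theorem tauC_one (τ : Γ →* (X ≃ₗᵢ[ℝ] X)) (z : ℂ ⊗[ℝ] X) : tauC τ 1 z = z := by
  induction z with
  | zero => simp
  | tmul c x => simp [tauC]
  | add a b ha hb => simp only [map_add, ha, hb]

theorem tauC_inv_eq_iff (τ : Γ →* (X ≃ₗᵢ[ℝ] X)) (γ : Γ) (y z : ℂ ⊗[ℝ] X) :
    tauC τ γ⁻¹ y = z ↔ y = tauC τ γ z := by
  constructor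
  · rintro rfl
    rw [← tauC_mul, mul_inv_cancel, tauC_one]
  · rintro rfl
    rw [← tauC_mul, inv_mul_cancel, tauC_one]

/-- The representation `(γ • u)_v = τ(γ)⁻¹ u_{γ v}`, for a set `S` acted on by `Γ`. -/
noncomputable def twistedRep {S : Type} (θ : Γ →* Equiv.Perm S) (τ : Γ →* (X ≃ₗᵢ[ℝ] X)) :
    Representation ℂ Γ (S → ℂ ⊗[ℝ] X) where
  toFun γ := LinearMap.pi fun v => (tauC τ γ⁻¹).comp (LinearMap.proj (θ γ v))
  map_one' := by
    refine LinearMap.ext fun u => funext fun v => ?_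
    simp [tauC_one]
  map_mul' γ δ := by
    refine LinearMap.ext fun u => funext fun v => ?_
    simp [tauC_mul, mul_comm γ δ]

@[simp]
theorem twistedRep_apply {S : Type} (θ : Γ →* Equiv.Perm S) (τ : Γ →* (X ≃ₗᵢ[ℝ] X)) (γ : Γ)
    (u : S → ℂ ⊗[ℝ] X) (v : S) : twistedRep θ τ γ u v = tauC τ γ⁻¹ (u (θ γ v)) :=
  rfl

theorem twistedRep_eq_smul_iff {S : Type} (θ : Γ →* Equiv.Perm S) (τ : Γ →* (X ≃ₗᵢ[ℝ] X))
    (χ : Γ →* ℂ) (u : S → ℂ ⊗[ℝ] X) (γ : Γ) :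
    twistedRep θ τ γ u = χ γ • u ↔ ∀ v, u (θ γ v) - χ γ • tauC τ γ (u v) = 0 := by
  simp only [funext_iff, twistedRep_apply, tauC_inv_eq_iff, Pi.smul_apply, map_smul, sub_eq_zero]

/-- The action of `Γ` on the points of `X` through `τ`. -/
def pointPerm (τ : Γ →* (X ≃ₗᵢ[ℝ] X)) : Γ →* Equiv.Perm X where
  toFun γ := (τ γ).toEquiv
  map_one' := by ext x; simp
  map_mul' γ δ := by ext x; simp

@[simp]
theorem pointPerm_apply (τ : Γ →* (X ≃ₗᵢ[ℝ] X)) (γ : Γ) (x : X) : pointPerm τ γ x = τ γ x :=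
  rfl

/-- The representation `(γ • y)_e = y_{γ e}` on the edge functions. -/
noncomputable def edgeRep (G : SimpleGraph V) (θ : Γ →* Equiv.Perm V)
    (hadj : ∀ (γ : Γ) (u v : V), G.Adj u v ↔ G.Adj (θ γ u) (θ γ v)) :
    Representation ℂ Γ (G.edgeSet → ℂ) where
  toFun γ := LinearMap.funLeft ℂ ℂ (edgeAct G θ hadj γ)
  map_one' := by
    refine LinearMap.ext fun y => funext fun e => ?_
    simp [LinearMap.funLeft_apply, edgeAct]
  map_mul' γ δ := by
    refine LinearMap.ext fun y => funext fun e => ?_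
    simp [LinearMap.funLeft_apply, edgeAct, mul_comm γ δ, Sym2.map_map, Equiv.Perm.coe_mul]

@[simp]
theorem edgeRep_apply (G : SimpleGraph V) (θ : Γ →* Equiv.Perm V)
    (hadj : ∀ (γ : Γ) (u v : V), G.Adj u v ↔ G.Adj (θ γ u) (θ γ v)) (γ : Γ)
    (y : G.edgeSet → ℂ) (e : G.edgeSet) : edgeRep G θ hadj γ y e = y (edgeAct G θ hadj γ e) :=
  rfl

theorem mem_Xchi_iff (θ : Γ →* Equiv.Perm V) (τ : Γ →* (X ≃ₗᵢ[ℝ] X)) (χ : Γ →* ℂ)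
    (u : V → ℂ ⊗[ℝ] X) : u ∈ Xchi θ τ χ ↔ ∀ γ, twistedRep θ τ γ u = χ γ • u := by
  simp only [twistedRep_eq_smul_iff]
  simp [Xchi, Submodule.mem_iInf]

theorem mem_Ychi_iff (G : SimpleGraph V) (θ : Γ →* Equiv.Perm V)
    (hadj : ∀ (γ : Γ) (u v : V), G.Adj u v ↔ G.Adj (θ γ u) (θ γ v)) (χ : Γ →* ℂ)
    (y : G.edgeSet → ℂ) : y ∈ Ychi G θ hadj χ ↔ ∀ γ, edgeRep G θ hadj γ y = χ γ • y := by
  simp [Ychi, Submodule.mem_iInf, funext_iff, sub_eq_zero]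

theorem mem_Tchi_iff (τ : Γ →* (X ≃ₗᵢ[ℝ] X)) (χ : Γ →* ℂ) (η : X → ℂ ⊗[ℝ] X) :
    η ∈ Tchi τ χ ↔ η ∈ TXC X ∧ ∀ γ, twistedRep (pointPerm τ) τ γ η = χ γ • η := by
  simp only [twistedRep_eq_smul_iff]
  simp [Tchi, Submodule.mem_iInf]

theorem twistedRep_mem_TXC (τ : Γ →* (X ≃ₗᵢ[ℝ] X)) (γ : Γ) (η : X → ℂ ⊗[ℝ] X)
    (hη : η ∈ TXC X) : twistedRep (pointPerm τ) τ γ η ∈ TXC X := by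
  induction hη using Submodule.span_induction with
  | mem η h =>
    obtain ⟨ζ, hζ, rfl⟩ := h
    convert one_tmul_mem_TXC (hζ.conj (τ γ)) using 1
    funext x
    rw [twistedRep_apply, tauC_inv_eq_iff]
    simp [tauC]
  | zero => simp
  | add η ζ _ _ h₁ h₂ => simpa only [map_add] using (TXC X).add_mem h₁ h₂
  | smul a η _ h => simpa only [map_smul] using (TXC X).smul_mem a h

section Equivariance

variable (G : SimpleGraph V) [Fintype G.edgeSet] (p : V → X) (θ : Γ →* Equiv.Perm V)
  (hadj : ∀ (γ : Γ) (u v : V), G.Adj u v ↔ G.Adj (θ γ u) (θ γ v)) (τ : Γ →* (X ≃ₗᵢ[ℝ] X))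

theorem rhoC_twistedRep (hsymm : ∀ (γ : Γ) (v : V), τ γ (p v) = p (θ γ v)) (γ : Γ)
    (η : X → ℂ ⊗[ℝ] X) :
    rhoC (V := V) p (twistedRep (pointPerm τ) τ γ η) = twistedRep θ τ γ (rhoC p η) := by
  funext v
  simp [rhoC, hsymm]

theorem fG_symm_comp (γ : Γ) (x : V → X) (e : G.edgeSet) :
    fG G (fun v => (τ γ).symm (x (θ γ v))) e = fG G x (edgeAct G θ hadj γ e) := by
  obtain ⟨e, he⟩ := e
  induction e using Sym2.ind with
  | _ u v => simp [fG, edgeAct, ← map_sub]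

theorem dfR_symm_comp (hwp : WellPositioned G p)
    (hsymm : ∀ (γ : Γ) (v : V), τ γ (p v) = p (θ γ v)) (γ : Γ) (u : V → X) (e : G.edgeSet) :
    dfR G p (fun v => (τ γ).symm (u (θ γ v))) e = dfR G p u (edgeAct G θ hadj γ e) := by
  let L : (V → X) →L[ℝ] (V → X) := ContinuousLinearMap.pi fun v =>
    (τ γ).symm.toContinuousLinearEquiv.toContinuousLinearMap.comp
      (ContinuousLinearMap.proj (θ γ v))
  have hLp : L p = p := funext fun v => by
    change (τ γ).symm (p (θ γ v)) = p v
    rw [← hsymm, LinearIsometryEquiv.symm_apply_apply]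
  have hd : HasFDerivAt (fG G) (dfR G p) p := hwp.hasFDerivAt
  have hd' : HasFDerivAt (fG G) (dfR G p) (L p) := by rwa [hLp]
  have h1 := hasFDerivAt_pi'.1 (hd'.comp p L.hasFDerivAt) e
  have h2 := hasFDerivAt_pi'.1 hd (edgeAct G θ hadj γ e)
  have heq : (fun x => (fG G ∘ L) x e) = fun x => fG G x (edgeAct G θ hadj γ e) :=
    funext fun x => fG_symm_comp G θ hadj τ γ x e
  rw [heq] at h1
  exact congrArg (fun A : (V → X) →L[ℝ] ℝ => A u) (h1.unique h2)

theorem dfC_twistedRep (hwp : WellPositioned G p)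
    (hsymm : ∀ (γ : Γ) (v : V), τ γ (p v) = p (θ γ v)) (γ : Γ) (u : V → ℂ ⊗[ℝ] X) :
    dfC G p (twistedRep θ τ γ u) = edgeRep G θ hadj γ (dfC G p u) := by
  have hre : ∀ z : ℂ ⊗[ℝ] X, tensorRe (tauC τ γ⁻¹ z) = (τ γ).symm (tensorRe z) := fun z => by
    induction z with
    | zero => simp
    | tmul c x => simp [tauC]
    | add a b ha hb => simp only [map_add, ha, hb]
  have him : ∀ z : ℂ ⊗[ℝ] X, tensorIm (tauC τ γ⁻¹ z) = (τ γ).symm (tensorIm z) := fun z => by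
    induction z with
    | zero => simp
    | tmul c x => simp [tauC]
    | add a b ha hb => simp only [map_add, ha, hb]
  funext e
  simp only [edgeRep_apply, dfC_apply, twistedRep_apply, hre, him,
    dfR_symm_comp G p θ hadj τ hwp hsymm γ (fun v => tensorRe (u v)),
    dfR_symm_comp G p θ hadj τ hwp hsymm γ (fun v => tensorIm (u v))]

theorem isotypicProj_mem_Tchi (χ : Γ →* ℂ) {η : X → ℂ ⊗[ℝ] X} (hη : η ∈ TXC X) :
    isotypicProj (twistedRep (pointPerm τ) τ) χ η ∈ Tchi τ χ :=
  (mem_Tchi_iff τ χ _).2 ⟨isotypicProj_mem (twistedRep_mem_TXC τ) χ hη,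
    fun γ => rho_isotypicProj _ χ γ η⟩

theorem full_iff_forall_chiFull [FiniteDimensional ℝ X]
    (hsymm : ∀ (γ : Γ) (v : V), τ γ (p v) = p (θ γ v)) :
    Full G p ↔ ∀ χ : Γ →* ℂ, ChiFull G p τ χ := by
  rw [full_iff_complex]
  constructor
  · exact fun h χ η hη => h η ((mem_Tchi_iff τ χ η).1 hη).1
  · intro h η hη h0
    rw [← sum_isotypicProj (twistedRep (pointPerm τ) τ) η]
    refine Finset.sum_eq_zero fun ψ _ => h _ _ (isotypicProj_mem_Tchi τ _ hη) ?_
    rw [map_isotypicProj (rhoC_twistedRep p θ τ hsymm), h0, map_zero]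

theorem infRigid_iff_forall_chiRigid [FiniteDimensional ℝ X]
    (hadj : ∀ (γ : Γ) (u v : V), G.Adj u v ↔ G.Adj (θ γ u) (θ γ v)) (hwp : WellPositioned G p)
    (hsymm : ∀ (γ : Γ) (v : V), τ γ (p v) = p (θ γ v)) :
    InfRigid G p ↔ ∀ χ : Γ →* ℂ, ChiRigid G p θ τ χ := by
  rw [infRigid_iff_complex]
  constructor
  · intro h χ u hu hdu
    obtain ⟨η, hη, rfl⟩ := h u hdu
    refine ⟨_, isotypicProj_mem_Tchi τ χ hη, ?_⟩
    rw [map_isotypicProj (rhoC_twistedRep p θ τ hsymm),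
      isotypicProj_eq_self ((mem_Xchi_iff θ τ χ _).1 hu)]
  · intro h u hdu
    have hproj : ∀ χ : Γ →* ℂ, ∃ η ∈ Tchi τ χ,
        rhoC (V := V) p η = isotypicProj (twistedRep θ τ) χ u := fun χ =>
      h χ _ ((mem_Xchi_iff θ τ χ _).2 fun γ => rho_isotypicProj _ χ γ u) <| by
        rw [map_isotypicProj (dfC_twistedRep G p θ hadj τ hwp hsymm), hdu, map_zero]
    choose η hη hηu using hproj
    refine ⟨∑ ψ : AddChar (Additive Γ) ℂ, η (charHom ψ),
      Submodule.sum_mem _ fun ψ _ => ((mem_Tchi_iff τ _ _).1 (hη _)).1, ?_⟩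
    rw [map_sum, Finset.sum_congr rfl fun ψ _ => hηu (charHom ψ), sum_isotypicProj]

theorem independent_iff_forall_chiIndependent (hwp : WellPositioned G p)
    (hsymm : ∀ (γ : Γ) (v : V), τ γ (p v) = p (θ γ v)) :
    Independent G p ↔ ∀ χ : Γ →* ℂ, ChiIndependent G p θ hadj τ χ := by
  rw [independent_iff_complex]
  constructor
  · intro h χ y hy
    obtain ⟨u, rfl⟩ := h y
    refine ⟨isotypicProj (twistedRep θ τ) χ u,
      (mem_Xchi_iff θ τ χ _).2 fun γ => rho_isotypicProj _ χ γ u, ?_⟩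
    rw [map_isotypicProj (dfC_twistedRep G p θ hadj τ hwp hsymm),
      isotypicProj_eq_self ((mem_Ychi_iff G θ hadj χ _).1 hy)]
  · intro h y
    have hproj : ∀ χ : Γ →* ℂ, ∃ u, dfC G p u = isotypicProj (edgeRep G θ hadj) χ y := fun χ =>
      (h χ _ ((mem_Ychi_iff G θ hadj χ _).2 fun γ => rho_isotypicProj _ χ γ y)).imp
        fun _ hu => hu.2
    choose u hu using hproj
    refine ⟨∑ ψ : AddChar (Additive Γ) ℂ, u (charHom ψ), ?_⟩
    rw [map_sum, Finset.sum_congr rfl fun ψ _ => hu (charHom ψ), sum_isotypicProj]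

end Equivariance

theorem symmetric_vs_character_rigidity
    (hd : 2 ≤ Module.finrank ℝ X) [FiniteDimensional ℝ X]
    (G : SimpleGraph V) [Fintype G.edgeSet] (p : V → X)
    (hpinj : Function.Injective p)
    (hwp : WellPositioned G p)
    (θ : Γ →* Equiv.Perm V)
    (hadj : ∀ (γ : Γ) (u v : V), G.Adj u v ↔ G.Adj (θ γ u) (θ γ v))
    (hfree : ∀ γ : Γ, γ ≠ 1 → ∀ v : V, θ γ v ≠ v)
    (τ : Γ →* (X ≃ₗᵢ[ℝ] X))
    (hsymm : ∀ (γ : Γ) (v : V), τ γ (p v) = p (θ γ v)) :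
    (Full G p ↔ ∀ χ : Γ →* ℂ, ChiFull G p τ χ) ∧
      (InfRigid G p ↔ ∀ χ : Γ →* ℂ, ChiRigid G p θ τ χ) ∧
      (Independent G p ↔ ∀ χ : Γ →* ℂ, ChiIndependent G p θ hadj τ χ) ∧
      (Isostatic G p ↔ ∀ χ : Γ →* ℂ, ChiIsostatic G p θ hadj τ χ) := by
  have hrigid := infRigid_iff_forall_chiRigid G p θ τ hadj hwp hsymm
  have hindep := independent_iff_forall_chiIndependent G p θ hadj τ hwp hsymm
  refine ⟨full_iff_forall_chiFull G p θ τ hsymm, hrigid, hindep, ?_⟩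
  exact (and_congr hrigid hindep).trans forall_and.symm

end Stmt4
end

section
/- Let 𝒢 = (G,p,θ,τ) be a well-positioned Γ-symmetric bar-joint framework in X, where θ acts freely on both the vertices and the edges of G, and let V_0 and E_0 be the sets of vertex orbits and edge orbits. Let χ ∈ Γ̂ and suppose 𝒢 is χ-symmetrically full. Then: (i) if 𝒢 is χ-symmetrically infinitesimally rigid, then |E_0| ≥ d·|V_0| − dim_ℂ 𝒯_χ(X); (ii) if 𝒢 is χ-symmetrically independent, then |E_0| ≤ d·|V_0| − dim_ℂ 𝒯_χ(X); (iii) if 𝒢 is χ-symmetrically isostatic, then |E_0| = d·|V_0| − dim_ℂ 𝒯_χ(X). -/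
/-!
Statement 6 (Proposition 2.12 / prop:counts): counting conditions on the numbers of
vertex and edge orbits for `χ`-symmetrically rigid/independent/isostatic frameworks.
-/

open scoped TensorProduct

namespace Stmt6

variable {V : Type} [Fintype V] [DecidableEq V]
variable {X : Type} [NormedAddCommGroup X] [NormedSpace ℝ X]
variable {Γ : Type} [CommGroup Γ] [Fintype Γ]

noncomputable def fG (G : SimpleGraph V) [Fintype G.edgeSet] (x : V → X) (e : G.edgeSet) : ℝ :=
  Sym2.lift ⟨fun v w => ‖x v - x w‖, fun v w => by simp only []; rw [norm_sub_rev]⟩ e.1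

noncomputable def WellPositioned (G : SimpleGraph V) [Fintype G.edgeSet] (p : V → X) : Prop :=
  DifferentiableAt ℝ (fG G) p

noncomputable def dfR (G : SimpleGraph V) [Fintype G.edgeSet] (p : V → X) :
    (V → X) →L[ℝ] (G.edgeSet → ℝ) :=
  fderiv ℝ (fG G) p

noncomputable def phiEdge (G : SimpleGraph V) [Fintype G.edgeSet] (p : V → X)
    (e : G.edgeSet) (v : V) : X →ₗ[ℝ] ℝ :=
  (LinearMap.proj (R := ℝ) (φ := fun _ : G.edgeSet => ℝ) e).comp
    ((dfR G p).toLinearMap.comp (LinearMap.single ℝ (fun _ : V => X) v))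

noncomputable def cplxFunctional (f : X →ₗ[ℝ] ℝ) : (ℂ ⊗[ℝ] X) →ₗ[ℂ] ℂ :=
  LinearMap.liftBaseChange ℂ ((Complex.ofRealCLM.toLinearMap).comp f)

noncomputable def dfC (G : SimpleGraph V) [Fintype G.edgeSet] (p : V → X) :
    (V → ℂ ⊗[ℝ] X) →ₗ[ℂ] (G.edgeSet → ℂ) :=
  LinearMap.pi fun e : G.edgeSet =>
    ∑ v : V, (cplxFunctional (phiEdge G p e v)).comp
      (LinearMap.proj (R := ℂ) (φ := fun _ : V => ℂ ⊗[ℝ] X) v)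

def edgeAct (G : SimpleGraph V) (θ : Γ →* Equiv.Perm V)
    (hadj : ∀ (γ : Γ) (u v : V), G.Adj u v ↔ G.Adj (θ γ u) (θ γ v))
    (γ : Γ) (e : G.edgeSet) : G.edgeSet :=
  ⟨Sym2.map (θ γ) e.1, by
    obtain ⟨e, he⟩ := e
    induction e using Sym2.ind with
    | _ u v => simpa using (hadj γ u v).1 (by simpa using he)⟩

noncomputable def tauC (τ : Γ →* (X ≃ₗᵢ[ℝ] X)) (γ : Γ) :
    (ℂ ⊗[ℝ] X) →ₗ[ℂ] (ℂ ⊗[ℝ] X) :=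
  LinearMap.baseChange ℂ ((τ γ).toLinearEquiv.toLinearMap)

noncomputable def Xchi (θ : Γ →* Equiv.Perm V) (τ : Γ →* (X ≃ₗᵢ[ℝ] X)) (χ : Γ →* ℂ) :
    Submodule ℂ (V → ℂ ⊗[ℝ] X) :=
  ⨅ (γ : Γ), ⨅ (v : V),
    LinearMap.ker
      ((LinearMap.proj (R := ℂ) (φ := fun _ : V => ℂ ⊗[ℝ] X) (θ γ v)) -
        χ γ • ((tauC τ γ).comp (LinearMap.proj (R := ℂ) (φ := fun _ : V => ℂ ⊗[ℝ] X) v)))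

noncomputable def Ychi (G : SimpleGraph V) (θ : Γ →* Equiv.Perm V)
    (hadj : ∀ (γ : Γ) (u v : V), G.Adj u v ↔ G.Adj (θ γ u) (θ γ v)) (χ : Γ →* ℂ) :
    Submodule ℂ (G.edgeSet → ℂ) :=
  ⨅ (γ : Γ), ⨅ (e : G.edgeSet),
    LinearMap.ker
      ((LinearMap.proj (R := ℂ) (φ := fun _ : G.edgeSet => ℂ) (edgeAct G θ hadj γ e)) -
        χ γ • (LinearMap.proj (R := ℂ) (φ := fun _ : G.edgeSet => ℂ) e))

def IsRigidMotion (α : X → ℝ → X) : Prop :=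
  (∀ x : X, ContinuousOn (α x) (Set.Icc (-1 : ℝ) 1)) ∧
    (∀ x : X, α x 0 = x) ∧
    (∀ x y : X, ∀ t ∈ Set.Icc (-1 : ℝ) 1, ‖α x t - α y t‖ = ‖x - y‖)

def IsInfRigidMotion (η : X → X) : Prop :=
  ∃ α : X → ℝ → X, IsRigidMotion α ∧ ∀ x : X, HasDerivAt (α x) (η x) 0

noncomputable def TXC (X : Type) [NormedAddCommGroup X] [NormedSpace ℝ X] :
    Submodule ℂ (X → ℂ ⊗[ℝ] X) :=
  Submodule.span ℂ
    {η' | ∃ η : X → X, IsInfRigidMotion η ∧ η' = fun x => (1 : ℂ) ⊗ₜ[ℝ] η x}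

noncomputable def Tchi (τ : Γ →* (X ≃ₗᵢ[ℝ] X)) (χ : Γ →* ℂ) :
    Submodule ℂ (X → ℂ ⊗[ℝ] X) :=
  TXC X ⊓
    ⨅ (γ : Γ), ⨅ (x : X),
      LinearMap.ker
        ((LinearMap.proj (R := ℂ) (φ := fun _ : X => ℂ ⊗[ℝ] X) (τ γ x)) -
          χ γ • ((tauC τ γ).comp (LinearMap.proj (R := ℂ) (φ := fun _ : X => ℂ ⊗[ℝ] X) x)))

noncomputable def rhoC (p : V → X) : (X → ℂ ⊗[ℝ] X) →ₗ[ℂ] (V → ℂ ⊗[ℝ] X) :=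
  LinearMap.pi fun v : V => LinearMap.proj (R := ℂ) (φ := fun _ : X => ℂ ⊗[ℝ] X) (p v)

noncomputable def ChiFull (G : SimpleGraph V) [Fintype G.edgeSet] (p : V → X)
    (τ : Γ →* (X ≃ₗᵢ[ℝ] X)) (χ : Γ →* ℂ) : Prop :=
  ∀ η ∈ Tchi τ χ, rhoC (V := V) p η = 0 → η = 0

noncomputable def ChiRigid (G : SimpleGraph V) [Fintype G.edgeSet] (p : V → X)
    (θ : Γ →* Equiv.Perm V) (τ : Γ →* (X ≃ₗᵢ[ℝ] X)) (χ : Γ →* ℂ) : Prop :=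
  ∀ u ∈ Xchi θ τ χ, dfC G p u = 0 → ∃ η ∈ Tchi τ χ, rhoC (V := V) p η = u

noncomputable def ChiIndependent (G : SimpleGraph V) [Fintype G.edgeSet] (p : V → X)
    (θ : Γ →* Equiv.Perm V)
    (hadj : ∀ (γ : Γ) (u v : V), G.Adj u v ↔ G.Adj (θ γ u) (θ γ v))
    (τ : Γ →* (X ≃ₗᵢ[ℝ] X)) (χ : Γ →* ℂ) : Prop :=
  ∀ y ∈ Ychi G θ hadj χ, ∃ u ∈ Xchi θ τ χ, dfC G p u = y

/-- The number of vertex orbits `|V₀|`. -/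
noncomputable def V0card (θ : Γ →* Equiv.Perm V) : ℕ :=
  Nat.card (Quot (fun u v : V => ∃ γ : Γ, θ γ u = v))

/-- The number of edge orbits `|E₀|`. -/
noncomputable def E0card (G : SimpleGraph V) (θ : Γ →* Equiv.Perm V)
    (hadj : ∀ (γ : Γ) (u v : V), G.Adj u v ↔ G.Adj (θ γ u) (θ γ v)) : ℕ :=
  Nat.card (Quot (fun e f : G.edgeSet => ∃ γ : Γ, edgeAct G θ hadj γ e = f))

/-- Twisted-equivariant maps out of a free finite `Γ`-set are determined by arbitrary values on
orbit representatives. -/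
theorem finrank_equivariant {S W : Type} [Finite S] [AddCommGroup W] [Module ℂ W]
    [Module.Finite ℂ W] (act : Γ → S → S) (act_one : ∀ s, act 1 s = s)
    (act_mul : ∀ a b s, act (a * b) s = act a (act b s))
    (act_free : ∀ γ, γ ≠ 1 → ∀ s, act γ s ≠ s)
    (σ : Γ → W →ₗ[ℂ] W) (σ_one : σ 1 = LinearMap.id)
    (σ_mul : ∀ a b, σ (a * b) = (σ a).comp (σ b))
    (M : Submodule ℂ (S → W)) (hM : ∀ u, u ∈ M ↔ ∀ γ s, u (act γ s) = σ γ (u s)) :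
    Module.finrank ℂ M =
      Module.finrank ℂ W * Nat.card (Quot (fun u v : S => ∃ γ : Γ, act γ u = v)) := by
  classical
  let r : S → S → Prop := fun u v => ∃ γ : Γ, act γ u = v
  have hr : Equivalence r :=
    { refl := fun s => ⟨1, act_one s⟩
      symm := by
        rintro u v ⟨γ, rfl⟩
        exact ⟨γ⁻¹, by rw [← act_mul, inv_mul_cancel, act_one]⟩
      trans := by
        rintro u v w ⟨a, rfl⟩ ⟨b, rfl⟩
        exact ⟨b * a, act_mul b a u⟩ }
  have hex : ∀ s : S, ∃ γ : Γ, act γ (Quot.out (Quot.mk r s)) = s := fun s =>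
    Quotient.exact (s := ⟨r, hr⟩) (Quot.out_eq (Quot.mk r s))
  choose g hg using hex
  have act_inj : ∀ a b s, act a s = act b s → a = b := by
    intro a b s h
    by_contra hne
    refine act_free (b⁻¹ * a) (fun h1 => hne ((inv_mul_eq_one.mp h1).symm)) s ?_
    rw [act_mul, h, ← act_mul, inv_mul_cancel, act_one]
  have hmk : ∀ γ s, Quot.mk r (act γ s) = Quot.mk r s := fun γ s =>
    (Quot.sound (r := r) ⟨γ, rfl⟩).symm
  have hgact : ∀ γ s, g (act γ s) = γ * g s := by
    intro γ s
    apply act_inj _ _ (Quot.out (Quot.mk r s))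
    have h := hg (act γ s)
    rw [hmk] at h
    rw [h, act_mul, hg]
  have hgout : ∀ q : Quot r, g q.out = 1 := by
    intro q
    apply act_inj _ _ q.out
    have h := hg q.out
    rw [Quot.out_eq] at h
    rw [h, act_one]
  let e : M ≃ₗ[ℂ] (Quot r → W) :=
    { toFun := fun u q => u.1 q.out
      map_add' := fun _ _ => rfl
      map_smul' := fun _ _ => rfl
      invFun := fun w => ⟨fun s => σ (g s) (w (Quot.mk r s)), by
        rw [hM]
        intro γ s
        simp only [hmk, hgact, σ_mul, LinearMap.comp_apply]⟩
      left_inv := by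
        rintro ⟨u, hu⟩
        ext s
        change σ (g s) (u (Quot.out (Quot.mk r s))) = u s
        rw [← (hM u).1 hu, hg]
      right_inv := by
        intro w
        ext q
        change σ (g q.out) (w (Quot.mk r q.out)) = w q
        rw [hgout, σ_one, Quot.out_eq, LinearMap.id_apply] }
  let _ : Fintype (Quot r) := Fintype.ofFinite _
  rw [e.finrank_eq, Module.finrank_pi_fintype, Finset.sum_const, Finset.card_univ, smul_eq_mul,
    mul_comm, Nat.card_eq_fintype_card]

theorem mem_Xchi (θ : Γ →* Equiv.Perm V) (τ : Γ →* (X ≃ₗᵢ[ℝ] X)) (χ : Γ →* ℂ)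
    (u : V → ℂ ⊗[ℝ] X) :
    u ∈ Xchi θ τ χ ↔ ∀ γ v, u (θ γ v) = (χ γ • tauC τ γ) (u v) := by
  simp [Xchi, sub_eq_zero]

theorem mem_Ychi (G : SimpleGraph V) (θ : Γ →* Equiv.Perm V)
    (hadj : ∀ (γ : Γ) (u v : V), G.Adj u v ↔ G.Adj (θ γ u) (θ γ v)) (χ : Γ →* ℂ)
    (y : G.edgeSet → ℂ) :
    y ∈ Ychi G θ hadj χ ↔ ∀ γ e, y (edgeAct G θ hadj γ e) = χ γ * y e := by
  simp [Ychi, sub_eq_zero]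

theorem mem_Tchi (τ : Γ →* (X ≃ₗᵢ[ℝ] X)) (χ : Γ →* ℂ) (η : X → ℂ ⊗[ℝ] X) :
    η ∈ Tchi τ χ ↔ η ∈ TXC X ∧ ∀ γ x, η (τ γ x) = χ γ • tauC τ γ (η x) := by
  simp [Tchi, sub_eq_zero]

theorem tauC_one (τ : Γ →* (X ≃ₗᵢ[ℝ] X)) : tauC τ 1 = LinearMap.id := by
  ext x
  simp [tauC]

theorem tauC_mul (τ : Γ →* (X ≃ₗᵢ[ℝ] X)) (a b : Γ) :
    tauC τ (a * b) = (tauC τ a).comp (tauC τ b) := by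
  ext x
  simp [tauC]

theorem finrank_Xchi [FiniteDimensional ℝ X] (θ : Γ →* Equiv.Perm V)
    (hfreeV : ∀ γ : Γ, γ ≠ 1 → ∀ v : V, θ γ v ≠ v) (τ : Γ →* (X ≃ₗᵢ[ℝ] X)) (χ : Γ →* ℂ) :
    Module.finrank ℂ (Xchi θ τ χ) = Module.finrank ℝ X * V0card (V := V) θ := by
  rw [finrank_equivariant (fun γ v => θ γ v) (by simp) (by simp) hfreeV
    (fun γ => χ γ • tauC τ γ) (by simp [tauC_one]) ?_ _ (mem_Xchi θ τ χ),
    Module.finrank_baseChange, V0card]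
  intro a b
  simp only [tauC_mul, map_mul, LinearMap.smul_comp, LinearMap.comp_smul, smul_smul,
    mul_comm (χ a)]

theorem finrank_Ychi (G : SimpleGraph V) [Fintype G.edgeSet] (θ : Γ →* Equiv.Perm V)
    (hadj : ∀ (γ : Γ) (u v : V), G.Adj u v ↔ G.Adj (θ γ u) (θ γ v))
    (hfreeE : ∀ γ : Γ, γ ≠ 1 → ∀ e : G.edgeSet, edgeAct G θ hadj γ e ≠ e) (χ : Γ →* ℂ) :
    Module.finrank ℂ (Ychi G θ hadj χ) = E0card G θ hadj := by
  rw [finrank_equivariant (edgeAct G θ hadj) ?_ ?_ hfreeE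
    (fun γ => χ γ • LinearMap.id) (by simp) ?_ _ (mem_Ychi G θ hadj χ),
    Module.finrank_self, one_mul, E0card]
  · rintro ⟨e, he⟩
    simp [edgeAct]
  · rintro a b ⟨e, he⟩
    simp [edgeAct, Sym2.map_map, Equiv.Perm.coe_mul]
  · intro a b
    ext
    simp

theorem dfC_apply (G : SimpleGraph V) [Fintype G.edgeSet] (p : V → X) (u : V → ℂ ⊗[ℝ] X)
    (e : G.edgeSet) : dfC G p u e = ∑ v, cplxFunctional (phiEdge G p e v) (u v) := by
  simp [dfC]

theorem dfR_apply (G : SimpleGraph V) [Fintype G.edgeSet] (p : V → X) (u : V → X)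
    (e : G.edgeSet) : dfR G p u e = ∑ v, phiEdge G p e v (u v) := by
  have h : u = ∑ v, Pi.single v (u v) := (Finset.univ_sum_single u).symm
  conv_lhs => rw [h]
  simp [phiEdge]

theorem dfC_one_tmul (G : SimpleGraph V) [Fintype G.edgeSet] (p u : V → X) (e : G.edgeSet) :
    dfC G p (fun v => (1 : ℂ) ⊗ₜ[ℝ] u v) e = (dfR G p u e : ℂ) := by
  simp [dfC_apply, dfR_apply, cplxFunctional]

theorem dfR_infRigidMotion (G : SimpleGraph V) [Fintype G.edgeSet] (p : V → X)
    (hwp : WellPositioned G p) (η : X → X) (hη : IsInfRigidMotion η) :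
    dfR G p (fun v => η (p v)) = 0 := by
  obtain ⟨α, ⟨-, h0, hiso⟩, hder⟩ := hη
  have hpath : HasDerivAt (fun t v => α (p v) t) (fun v => η (p v)) 0 :=
    hasDerivAt_pi.2 fun v => hder (p v)
  have hbase : (fun v => α (p v) 0) = p := funext fun v => h0 (p v)
  have hf : HasFDerivAt (fG G) (dfR G p) (fun v => α (p v) 0) := by
    rw [hbase]
    exact DifferentiableAt.hasFDerivAt hwp
  have hcomp : HasDerivAt (fun t => fG G (fun v => α (p v) t)) (dfR G p (fun v => η (p v))) 0 :=
    HasFDerivAt.comp_hasDerivAt (f := fun t v => α (p v) t) (0 : ℝ) hf hpath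
  have hconst : (fun t => fG G (fun v => α (p v) t)) =ᶠ[nhds 0] fun _ => fG G p := by
    filter_upwards [Icc_mem_nhds (show (-1 : ℝ) < 0 by norm_num) (show (0 : ℝ) < 1 by norm_num)]
      with t ht
    ext ⟨e, he⟩
    induction e using Sym2.ind with
    | _ v w => exact hiso (p v) (p w) t ht
  exact hcomp.unique ((hasDerivAt_const (0 : ℝ) (fG G p)).congr_of_eventuallyEq hconst)

theorem dfC_rhoC (G : SimpleGraph V) [Fintype G.edgeSet] (p : V → X)
    (hwp : WellPositioned G p) (η : X → ℂ ⊗[ℝ] X) (hη : η ∈ TXC X) :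
    dfC G p (rhoC p η) = 0 := by
  have hle : TXC X ≤ LinearMap.ker ((dfC G p).comp (rhoC p)) := by
    refine Submodule.span_le.2 ?_
    rintro _ ⟨η, hη, rfl⟩
    change dfC G p (fun v => (1 : ℂ) ⊗ₜ[ℝ] η (p v)) = 0
    ext e
    rw [dfC_one_tmul, dfR_infRigidMotion G p hwp η hη]
    simp
  exact hle hη

theorem phiEdge_equivariant (G : SimpleGraph V) [Fintype G.edgeSet] (p : V → X)
    (hwp : WellPositioned G p) (θ : Γ →* Equiv.Perm V)
    (hadj : ∀ (γ : Γ) (u v : V), G.Adj u v ↔ G.Adj (θ γ u) (θ γ v))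
    (τ : Γ →* (X ≃ₗᵢ[ℝ] X)) (hsymm : ∀ (γ : Γ) (v : V), τ γ (p v) = p (θ γ v))
    (γ : Γ) (e : G.edgeSet) (v : V) :
    (phiEdge G p (edgeAct G θ hadj γ e) (θ γ v)).comp (τ γ).toLinearEquiv.toLinearMap =
      phiEdge G p e v := by
  let A : (V → X) →L[ℝ] (V → X) := ContinuousLinearMap.pi fun v =>
    ((τ γ).toContinuousLinearEquiv : X →L[ℝ] X).comp
      (ContinuousLinearMap.proj (R := ℝ) (φ := fun _ : V => X) ((θ γ).symm v))
  have hA : ∀ x v, A x v = τ γ (x ((θ γ).symm v)) := fun _ _ => rfl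
  have hAp : A p = p := by
    ext w
    rw [hA, hsymm, Equiv.apply_symm_apply]
  have hinv : ∀ x, fG G (A x) (edgeAct G θ hadj γ e) = fG G x e := by
    intro x
    obtain ⟨e, he⟩ := e
    induction e using Sym2.ind with
    | _ a b =>
      change ‖A x (θ γ a) - A x (θ γ b)‖ = ‖x a - x b‖
      rw [hA, hA, Equiv.symm_apply_apply, Equiv.symm_apply_apply, ← map_sub,
        LinearIsometryEquiv.norm_map]
  have hf : HasFDerivAt (fG G) (dfR G p) p := DifferentiableAt.hasFDerivAt hwp
  have hfA : HasFDerivAt (fG G) (dfR G p) (A p) := by rwa [hAp]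
  have h₁ := hasFDerivAt_pi'.1 (hfA.comp p A.hasFDerivAt) (edgeAct G θ hadj γ e)
  have h₂ := hasFDerivAt_pi'.1 hf e
  have hfun : (fun x => (fG G ∘ A) x (edgeAct G θ hadj γ e)) = fun x => fG G x e :=
    funext hinv
  rw [hfun] at h₁
  have huniq := h₁.unique h₂
  ext x
  have hsingle : A (Pi.single v x) = Pi.single (θ γ v) (τ γ x) := by
    ext w
    rw [hA]
    by_cases hw : w = θ γ v
    · subst hw
      simp
    · have hw' : (θ γ).symm w ≠ v := fun h => hw ((Equiv.symm_apply_eq _).1 h)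
      simp [hw, hw']
  have hx := DFunLike.congr_fun huniq (Pi.single v x)
  change dfR G p (A (Pi.single v x)) (edgeAct G θ hadj γ e) = dfR G p (Pi.single v x) e at hx
  rw [hsingle] at hx
  exact hx

theorem cplxFunctional_comp_baseChange (f : X →ₗ[ℝ] ℝ) (g : X →ₗ[ℝ] X) :
    (cplxFunctional f).comp (g.baseChange ℂ) = cplxFunctional (f.comp g) := by
  ext x
  simp [cplxFunctional]

theorem dfC_mem_Ychi (G : SimpleGraph V) [Fintype G.edgeSet] (p : V → X)
    (hwp : WellPositioned G p) (θ : Γ →* Equiv.Perm V)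
    (hadj : ∀ (γ : Γ) (u v : V), G.Adj u v ↔ G.Adj (θ γ u) (θ γ v))
    (τ : Γ →* (X ≃ₗᵢ[ℝ] X)) (hsymm : ∀ (γ : Γ) (v : V), τ γ (p v) = p (θ γ v))
    (χ : Γ →* ℂ) (u : V → ℂ ⊗[ℝ] X) (hu : u ∈ Xchi θ τ χ) :
    dfC G p u ∈ Ychi G θ hadj χ := by
  rw [mem_Xchi] at hu
  rw [mem_Ychi]
  intro γ e
  rw [dfC_apply, dfC_apply, ← Equiv.sum_comp (θ γ), Finset.mul_sum]
  refine Finset.sum_congr rfl fun v _ => ?_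
  rw [hu, LinearMap.smul_apply, map_smul, smul_eq_mul,
    ← phiEdge_equivariant G p hwp θ hadj τ hsymm γ e v, ← cplxFunctional_comp_baseChange]
  rfl

theorem rhoC_mem_Xchi (p : V → X) (θ : Γ →* Equiv.Perm V)
    (τ : Γ →* (X ≃ₗᵢ[ℝ] X)) (hsymm : ∀ (γ : Γ) (v : V), τ γ (p v) = p (θ γ v))
    (χ : Γ →* ℂ) (η : X → ℂ ⊗[ℝ] X) (hη : η ∈ Tchi τ χ) : rhoC p η ∈ Xchi θ τ χ := by
  rw [mem_Xchi]
  intro γ v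
  change η (p (θ γ v)) = χ γ • tauC τ γ (η (p v))
  rw [← hsymm]
  exact ((mem_Tchi τ χ η).1 hη).2 γ (p v)

theorem orbit_counts
    (hd : 2 ≤ Module.finrank ℝ X) [FiniteDimensional ℝ X]
    (G : SimpleGraph V) [Fintype G.edgeSet] (p : V → X)
    (hpinj : Function.Injective p)
    (hwp : WellPositioned G p)
    (θ : Γ →* Equiv.Perm V)
    (hadj : ∀ (γ : Γ) (u v : V), G.Adj u v ↔ G.Adj (θ γ u) (θ γ v))
    (hfreeV : ∀ γ : Γ, γ ≠ 1 → ∀ v : V, θ γ v ≠ v)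
    (hfreeE : ∀ γ : Γ, γ ≠ 1 → ∀ e : G.edgeSet, edgeAct G θ hadj γ e ≠ e)
    (τ : Γ →* (X ≃ₗᵢ[ℝ] X))
    (hsymm : ∀ (γ : Γ) (v : V), τ γ (p v) = p (θ γ v))
    (χ : Γ →* ℂ)
    (hfull : ChiFull G p τ χ) :
    (ChiRigid G p θ τ χ →
      (Module.finrank ℝ X : ℤ) * V0card (V := V) θ - Module.finrank ℂ (Tchi τ χ) ≤
        (E0card G θ hadj : ℤ)) ∧
    (ChiIndependent G p θ hadj τ χ →
      (E0card G θ hadj : ℤ) ≤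
        (Module.finrank ℝ X : ℤ) * V0card (V := V) θ - Module.finrank ℂ (Tchi τ χ)) ∧
    (ChiRigid G p θ τ χ → ChiIndependent G p θ hadj τ χ →
      (E0card G θ hadj : ℤ) =
        (Module.finrank ℝ X : ℤ) * V0card (V := V) θ - Module.finrank ℂ (Tchi τ χ)) := by
  let ρ : Tchi τ χ →ₗ[ℂ] Xchi θ τ χ :=
    (rhoC p).restrict (rhoC_mem_Xchi p θ τ hsymm χ)
  let R : Xchi θ τ χ →ₗ[ℂ] Ychi G θ hadj χ :=
    (dfC G p).restrict (dfC_mem_Ychi G p hwp θ hadj τ hsymm χ)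
  have hρ : Function.Injective ρ := by
    rw [← LinearMap.ker_eq_bot, LinearMap.ker_eq_bot']
    rintro ⟨η, hη⟩ h
    exact Subtype.ext (hfull η hη (congrArg Subtype.val h))
  have hcomplex : LinearMap.range ρ ≤ LinearMap.ker R := by
    rintro _ ⟨⟨η, hη⟩, rfl⟩
    exact Subtype.ext (dfC_rhoC G p hwp η ((mem_Tchi τ χ η).1 hη).1)
  have hrank := R.finrank_range_add_finrank_ker
  have hT : Module.finrank ℂ (LinearMap.range ρ) = Module.finrank ℂ (Tchi τ χ) :=
    LinearMap.finrank_range_of_inj hρ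
  rw [finrank_Xchi θ hfreeV τ χ] at hrank
  have hY := finrank_Ychi G θ hadj hfreeE χ
  have hlower : ChiRigid G p θ τ χ →
      (Module.finrank ℝ X : ℤ) * V0card (V := V) θ - Module.finrank ℂ (Tchi τ χ) ≤
        (E0card G θ hadj : ℤ) := by
    intro hrigid
    have hker : LinearMap.ker R ≤ LinearMap.range ρ := by
      rintro ⟨u, hu⟩ h
      obtain ⟨η, hη, hηu⟩ := hrigid u hu (congrArg Subtype.val h)
      exact ⟨⟨η, hη⟩, Subtype.ext hηu⟩
    have h₁ := Submodule.finrank_mono hker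
    have h₂ := Submodule.finrank_le (LinearMap.range R)
    zify at *
    linarith
  have hupper : ChiIndependent G p θ hadj τ χ →
      (E0card G θ hadj : ℤ) ≤
        (Module.finrank ℝ X : ℤ) * V0card (V := V) θ - Module.finrank ℂ (Tchi τ χ) := by
    intro hindep
    have hsurj : LinearMap.range R = ⊤ := by
      rw [LinearMap.range_eq_top]
      rintro ⟨y, hy⟩
      obtain ⟨u, hu, huy⟩ := hindep y hy
      exact ⟨⟨u, hu⟩, Subtype.ext huy⟩
    have h₁ := Submodule.finrank_mono hcomplex
    rw [hsurj, finrank_top] at hrank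
    zify at *
    linarith
  exact ⟨hlower, hupper, fun hr hi => le_antisymm (hupper hi) (hlower hr)⟩

end Stmt6
end

section
/- Let X be a finite-dimensional real normed vector space of dimension d ≥ 2, let Γ be a finite abelian group, let τ : Γ → Isom(X) be a group homomorphism and let χ ∈ Γ̂. If 𝒯(X) is minimal, then dim_ℂ 𝒯_χ(X) = dim_ℂ ( ⋂_{γ∈Γ} ker(τ(γ) − \overline{χ(γ)}·I) ), where each τ(γ) is regarded as a complex-linear operator on X_ℂ and I is the identity on X_ℂ. -/
/-!
Statement 7 (Lemma 2.13 / lem:dimension): if `𝒯(X)` is minimal then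
`dim_ℂ 𝒯_χ(X) = dim_ℂ (⋂_γ ker (τ(γ) - conj (χ γ) · I))`.
-/

open scoped TensorProduct

namespace Stmt7

variable {X : Type} [NormedAddCommGroup X] [NormedSpace ℝ X]
variable {Γ : Type} [CommGroup Γ] [Fintype Γ]

def IsRigidMotion (α : X → ℝ → X) : Prop :=
  (∀ x : X, ContinuousOn (α x) (Set.Icc (-1 : ℝ) 1)) ∧
    (∀ x : X, α x 0 = x) ∧
    (∀ x y : X, ∀ t ∈ Set.Icc (-1 : ℝ) 1, ‖α x t - α y t‖ = ‖x - y‖)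

def IsInfRigidMotion (η : X → X) : Prop :=
  ∃ α : X → ℝ → X, IsRigidMotion α ∧ ∀ x : X, HasDerivAt (α x) (η x) 0

/-- `𝒯(X)` is minimal: every infinitesimal rigid motion is a constant vector field. -/
def MinimalT (X : Type) [NormedAddCommGroup X] [NormedSpace ℝ X] : Prop :=
  ∀ η : X → X, IsInfRigidMotion η → ∃ x0 : X, ∀ x : X, η x = x0

noncomputable def TXC (X : Type) [NormedAddCommGroup X] [NormedSpace ℝ X] :
    Submodule ℂ (X → ℂ ⊗[ℝ] X) :=
  Submodule.span ℂ
    {η' | ∃ η : X → X, IsInfRigidMotion η ∧ η' = fun x => (1 : ℂ) ⊗ₜ[ℝ] η x}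

noncomputable def tauC (τ : Γ →* (X ≃ₗᵢ[ℝ] X)) (γ : Γ) :
    (ℂ ⊗[ℝ] X) →ₗ[ℂ] (ℂ ⊗[ℝ] X) :=
  LinearMap.baseChange ℂ ((τ γ).toLinearEquiv.toLinearMap)

noncomputable def Tchi (τ : Γ →* (X ≃ₗᵢ[ℝ] X)) (χ : Γ →* ℂ) :
    Submodule ℂ (X → ℂ ⊗[ℝ] X) :=
  TXC X ⊓
    ⨅ (γ : Γ), ⨅ (x : X),
      LinearMap.ker
        ((LinearMap.proj (R := ℂ) (φ := fun _ : X => ℂ ⊗[ℝ] X) (τ γ x)) -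
          χ γ • ((tauC τ γ).comp (LinearMap.proj (R := ℂ) (φ := fun _ : X => ℂ ⊗[ℝ] X) x)))

theorem isInfRigidMotion_const (v : X) : IsInfRigidMotion fun _ : X => v := by
  refine ⟨fun x t => x + t • v, ⟨fun x => by fun_prop, fun x => by simp, fun x y t _ => by simp⟩,
    fun x => ?_⟩
  simpa using ((hasDerivAt_id (0 : ℝ)).smul_const v).const_add x

/-- Vectors of the complexification, viewed as constant vector fields. -/
noncomputable def constField (X : Type) [NormedAddCommGroup X] [NormedSpace ℝ X] :
    (ℂ ⊗[ℝ] X) →ₗ[ℂ] (X → ℂ ⊗[ℝ] X) :=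
  LinearMap.pi fun _ => LinearMap.id

theorem constField_apply (v : ℂ ⊗[ℝ] X) (x : X) : constField X v x = v := rfl

theorem constField_injective : Function.Injective (constField X) :=
  fun _ _ h => congrFun h 0

theorem range_constField_le_TXC : LinearMap.range (constField X) ≤ TXC X := by
  rintro _ ⟨v, rfl⟩
  induction v using TensorProduct.induction_on with
  | zero => simp
  | add v w hv hw => rw [map_add]; exact add_mem hv hw
  | tmul z v =>
    have h : z ⊗ₜ[ℝ] v = z • ((1 : ℂ) ⊗ₜ[ℝ] v) := by simp [TensorProduct.smul_tmul']
    rw [h, map_smul]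
    exact Submodule.smul_mem _ _ (Submodule.subset_span ⟨_, isInfRigidMotion_const v, rfl⟩)

theorem TXC_eq_range_constField (hmin : MinimalT X) :
    TXC X = LinearMap.range (constField X) := by
  refine le_antisymm (Submodule.span_le.2 ?_) range_constField_le_TXC
  rintro _ ⟨η, hη, rfl⟩
  obtain ⟨v, hv⟩ := hmin η hη
  exact ⟨(1 : ℂ) ⊗ₜ[ℝ] v, funext fun x => by rw [hv x, constField_apply]⟩

theorem conj_mul_self_of_character (χ : Γ →* ℂ) (γ : Γ) :
    (starRingEnd ℂ) (χ γ) * χ γ = 1 := by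
  have h : ‖χ γ‖ = 1 := (χ.isOfFinOrder (isOfFinOrder_of_finite γ)).norm_eq_one
  rw [Complex.conj_mul', h]
  simp

theorem constField_mem_Tchi_iff (τ : Γ →* (X ≃ₗᵢ[ℝ] X)) (χ : Γ →* ℂ) (v : ℂ ⊗[ℝ] X) :
    constField X v ∈ Tchi τ χ ↔
      v ∈ ⨅ γ : Γ, LinearMap.ker (tauC τ γ - (starRingEnd ℂ) (χ γ) • LinearMap.id) := by
  have hv : constField X v ∈ TXC X := range_constField_le_TXC ⟨v, rfl⟩
  simp only [Tchi, Submodule.mem_inf, hv, true_and, Submodule.mem_iInf, LinearMap.mem_ker,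
    LinearMap.sub_apply, LinearMap.smul_apply, LinearMap.comp_apply, LinearMap.proj_apply,
    constField_apply, LinearMap.id_apply, sub_eq_zero, forall_const]
  refine forall_congr' fun γ => ⟨fun h => ?_, fun h => ?_⟩
  · conv_rhs => rw [h]
    rw [smul_smul, conj_mul_self_of_character, one_smul]
  · rw [h, smul_smul, mul_comm, conj_mul_self_of_character, one_smul]

theorem Tchi_eq_map_constField (τ : Γ →* (X ≃ₗᵢ[ℝ] X)) (χ : Γ →* ℂ) (hmin : MinimalT X) :
    Tchi τ χ = Submodule.map (constField X)
      (⨅ γ : Γ, LinearMap.ker (tauC τ γ - (starRingEnd ℂ) (χ γ) • LinearMap.id)) := by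
  ext η
  constructor
  · intro h
    have hη : η ∈ TXC X := h.1
    rw [TXC_eq_range_constField hmin] at hη
    obtain ⟨v, rfl⟩ := hη
    exact ⟨v, (constField_mem_Tchi_iff τ χ v).1 h, rfl⟩
  · rintro ⟨v, hv, rfl⟩
    exact (constField_mem_Tchi_iff τ χ v).2 hv

theorem dim_Tchi_of_minimal
    (hd : 2 ≤ Module.finrank ℝ X) [FiniteDimensional ℝ X]
    (τ : Γ →* (X ≃ₗᵢ[ℝ] X)) (χ : Γ →* ℂ)
    (hmin : MinimalT X) :
    Module.finrank ℂ (Tchi τ χ) =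
      Module.finrank ℂ
        (↥(⨅ γ : Γ, LinearMap.ker (tauC τ γ - (starRingEnd ℂ) (χ γ) • LinearMap.id))) := by
  rw [Tchi_eq_map_constField τ χ hmin]
  exact (Submodule.equivMapOfInjective _ constField_injective _).finrank_eq.symm

end Stmt7
end

section
/- Let X be a finite-dimensional real normed vector space of dimension d ≥ 2, let n ≥ 2 and let τ : ℤ_n → Isom(X) be a group homomorphism. If 𝒯(X) is minimal, then for each j = 0,1,…,n−1, dim_ℂ 𝒯_{χ_j}(X) = dim_ℂ ker(τ(ω) − \overline{ω}^j·I), where τ(ω) is regarded as a complex-linear operator on X_ℂ and I is the identity on X_ℂ. -/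
/-!
Statement 8 (Lemma 2.14 / lem:dimensionCyclic): for a representation of the cyclic
group `ℤ_n = ⟨ω⟩` with `𝒯(X)` minimal, `dim_ℂ 𝒯_{χ_j}(X) = dim_ℂ ker (τ(ω) - ω̄^j I)`.
-/

open scoped TensorProduct

namespace Stmt8

variable {X : Type} [NormedAddCommGroup X] [NormedSpace ℝ X]
variable {Γ : Type} [CommGroup Γ] [Fintype Γ]

def IsRigidMotion (α : X → ℝ → X) : Prop :=
  (∀ x : X, ContinuousOn (α x) (Set.Icc (-1 : ℝ) 1)) ∧
    (∀ x : X, α x 0 = x) ∧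
    (∀ x y : X, ∀ t ∈ Set.Icc (-1 : ℝ) 1, ‖α x t - α y t‖ = ‖x - y‖)

def IsInfRigidMotion (η : X → X) : Prop :=
  ∃ α : X → ℝ → X, IsRigidMotion α ∧ ∀ x : X, HasDerivAt (α x) (η x) 0

def MinimalT (X : Type) [NormedAddCommGroup X] [NormedSpace ℝ X] : Prop :=
  ∀ η : X → X, IsInfRigidMotion η → ∃ x0 : X, ∀ x : X, η x = x0

noncomputable def TXC (X : Type) [NormedAddCommGroup X] [NormedSpace ℝ X] :
    Submodule ℂ (X → ℂ ⊗[ℝ] X) :=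
  Submodule.span ℂ
    {η' | ∃ η : X → X, IsInfRigidMotion η ∧ η' = fun x => (1 : ℂ) ⊗ₜ[ℝ] η x}

noncomputable def tauC (τ : Γ →* (X ≃ₗᵢ[ℝ] X)) (γ : Γ) :
    (ℂ ⊗[ℝ] X) →ₗ[ℂ] (ℂ ⊗[ℝ] X) :=
  LinearMap.baseChange ℂ ((τ γ).toLinearEquiv.toLinearMap)

noncomputable def Tchi (τ : Γ →* (X ≃ₗᵢ[ℝ] X)) (χ : Γ →* ℂ) :
    Submodule ℂ (X → ℂ ⊗[ℝ] X) :=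
  TXC X ⊓
    ⨅ (γ : Γ), ⨅ (x : X),
      LinearMap.ker
        ((LinearMap.proj (R := ℂ) (φ := fun _ : X => ℂ ⊗[ℝ] X) (τ γ x)) -
          χ γ • ((tauC τ γ).comp (LinearMap.proj (R := ℂ) (φ := fun _ : X => ℂ ⊗[ℝ] X) x)))

/-- The primitive `n`-th root of unity `ω = e^{2πi/n}`. -/
noncomputable def omega (n : ℕ) : ℂ := Complex.exp (2 * Real.pi * Complex.I / n)

/-- Constant vector fields with value in the complexification of `X`. -/
noncomputable def constField (X : Type) [NormedAddCommGroup X] [NormedSpace ℝ X] :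
    (ℂ ⊗[ℝ] X) →ₗ[ℂ] (X → ℂ ⊗[ℝ] X) :=
  LinearMap.pi fun _ => LinearMap.id

theorem constField_apply (c : ℂ ⊗[ℝ] X) (x : X) : constField X c x = c := rfl

theorem constField_injective : Function.Injective (constField X) := fun _ _ h => congrFun h 0

/-- Translations are rigid motions, so constant fields are infinitesimal rigid motions. -/
theorem isInfRigidMotion_const (v : X) : IsInfRigidMotion (fun _ : X => v) := by
  refine ⟨fun x t => x + t • v, ⟨fun x => by fun_prop, fun x => by simp, fun x y t _ => by simp⟩,
    fun x => ?_⟩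
  simpa using ((hasDerivAt_id (0 : ℝ)).smul_const v).const_add x

theorem TXC_eq_range_constField (hmin : MinimalT X) :
    TXC X = LinearMap.range (constField X) := by
  apply le_antisymm
  · refine Submodule.span_le.2 ?_
    rintro _ ⟨η, hη, rfl⟩
    obtain ⟨v, hv⟩ := hmin η hη
    exact ⟨1 ⊗ₜ v, funext fun x => by rw [constField_apply, hv x]⟩
  · rintro _ ⟨c, rfl⟩
    induction c with
    | zero => simp
    | add a b ha hb => rw [map_add]; exact add_mem ha hb
    | tmul z v =>
      have hz : z ⊗ₜ[ℝ] v = z • ((1 : ℂ) ⊗ₜ[ℝ] v) := by simp [TensorProduct.smul_tmul']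
      rw [hz, map_smul]
      exact Submodule.smul_mem _ _
        (Submodule.subset_span ⟨fun _ => v, isInfRigidMotion_const v, rfl⟩)

theorem mem_Tchi {τ : Γ →* (X ≃ₗᵢ[ℝ] X)} {χ : Γ →* ℂ} {η : X → ℂ ⊗[ℝ] X} :
    η ∈ Tchi τ χ ↔ η ∈ TXC X ∧ ∀ γ x, η (τ γ x) = χ γ • tauC τ γ (η x) := by
  simp [Tchi, Submodule.mem_iInf, sub_eq_zero]

theorem tauC_one (τ : Γ →* (X ≃ₗᵢ[ℝ] X)) : tauC τ 1 = LinearMap.id := by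
  rw [tauC, map_one]
  exact LinearMap.baseChange_id

theorem tauC_mul (τ : Γ →* (X ≃ₗᵢ[ℝ] X)) (a b : Γ) :
    tauC τ (a * b) = (tauC τ a).comp (tauC τ b) := by
  rw [tauC, map_mul]
  exact LinearMap.baseChange_comp _ _

/-- A vector fixed by the `χ`-twisted action of a generator is fixed by the whole twisted action. -/
theorem forall_eq_smul_tauC_iff {g : Γ} (hgen : ∀ x : Γ, x ∈ Subgroup.zpowers g)
    (τ : Γ →* (X ≃ₗᵢ[ℝ] X)) (χ : Γ →* ℂ) (c : ℂ ⊗[ℝ] X) :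
    (∀ γ, c = χ γ • tauC τ γ c) ↔ c = χ g • tauC τ g c := by
  refine ⟨fun h => h g, fun h γ => ?_⟩
  obtain ⟨k, rfl⟩ := mem_powers_iff_mem_zpowers.2 (hgen γ)
  induction k with
  | zero => simp [tauC_one]
  | succ k ih =>
    have ih' : c = χ (g ^ k) • tauC τ (g ^ k) c := ih
    change c = χ (g ^ (k + 1)) • tauC τ (g ^ (k + 1)) c
    rw [pow_succ, map_mul, tauC_mul, LinearMap.comp_apply, mul_smul, ← map_smul, ← h, ← ih']

theorem omega_pow_mul_conj_pow (n j : ℕ) : omega n ^ j * (starRingEnd ℂ) (omega n) ^ j = 1 := by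
  have h : ‖omega n‖ = 1 := by
    have : (2 * Real.pi * Complex.I / n : ℂ) = ((2 * Real.pi / n : ℝ) : ℂ) * Complex.I := by
      push_cast; ring
    rw [omega, this, Complex.norm_exp_ofReal_mul_I]
  rw [← mul_pow, Complex.mul_conj, Complex.normSq_eq_norm_sq, h]
  simp

theorem Tchi_eq_map_constField {n j : ℕ} {g : Γ} (hgen : ∀ x : Γ, x ∈ Subgroup.zpowers g)
    (τ : Γ →* (X ≃ₗᵢ[ℝ] X)) (hmin : MinimalT X) {χ : Γ →* ℂ} (hχ : χ g = omega n ^ j) :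
    Tchi τ χ = (LinearMap.ker
      (tauC τ g - ((starRingEnd ℂ) (omega n)) ^ j • LinearMap.id)).map (constField X) := by
  have hω := omega_pow_mul_conj_pow n j
  have key (c : ℂ ⊗[ℝ] X) : c = χ g • tauC τ g c ↔
      tauC τ g c = (starRingEnd ℂ) (omega n) ^ j • c := by
    rw [hχ]
    constructor
    · intro h
      conv_rhs => rw [h]
      rw [smul_smul, mul_comm, hω, one_smul]
    · intro h
      rw [h, smul_smul, hω, one_smul]
  ext η
  simp only [mem_Tchi, TXC_eq_range_constField hmin, Submodule.mem_map, LinearMap.mem_range,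
    LinearMap.mem_ker, LinearMap.sub_apply, LinearMap.smul_apply, LinearMap.id_apply, sub_eq_zero]
  constructor
  · rintro ⟨⟨c, rfl⟩, h⟩
    exact ⟨c, (key c).1 (h g 0), rfl⟩
  · rintro ⟨c, hc, rfl⟩
    exact ⟨⟨c, rfl⟩, fun γ _ => (forall_eq_smul_tauC_iff hgen τ χ c).2 ((key c).2 hc) γ⟩

theorem dim_Tchi_cyclic
    (hd : 2 ≤ Module.finrank ℝ X) [FiniteDimensional ℝ X]
    (n : ℕ) (hn : 2 ≤ n)
    -- `Γ` is the multiplicative cyclic group of order `n`, generated by `g` (playing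
    -- the role of `ω ∈ ℤ_n`)
    (g : Γ) (hord : orderOf g = n) (hgen : ∀ x : Γ, x ∈ Subgroup.zpowers g)
    (τ : Γ →* (X ≃ₗᵢ[ℝ] X))
    (hmin : MinimalT X) :
    ∀ j : ℕ, j < n → ∀ χ : Γ →* ℂ, χ g = omega n ^ j →
      Module.finrank ℂ (Tchi τ χ) =
        Module.finrank ℂ
          (↥(LinearMap.ker (tauC τ g - ((starRingEnd ℂ) (omega n)) ^ j • LinearMap.id))) := by
  intro j _ χ hχ
  rw [Tchi_eq_map_constField hgen τ hmin hχ]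
  exact (Submodule.equivMapOfInjective _ constField_injective _).finrank_eq.symm

end Stmt8
end

section
/- Let (G_0,ψ) be a (2,2,0)-gain-tight ℤ_2-gain graph and let H_0' and H_0'' be balanced subgraphs of (G_0,ψ) with V(H_0') ∩ V(H_0'') ≠ ∅ and f(H_0') = 2 = f(H_0''). Then either (i) f(H_0' ∩ H_0'') = 4 and f(H_0' ∪ H_0'') = 0, or (ii) f(H_0' ∪ H_0'') = f(H_0' ∩ H_0'') = 2; moreover, (ii) holds if and only if H_0' ∪ H_0'' is balanced. (Here union and intersection of subgraphs are taken vertex-wise and edge-wise.) -/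
/-!
Statement 14 (Lemma 3.7 / lem:unionint): for balanced subgraphs `H'`, `H''` of a
`(2,2,0)`-gain-tight `ℤ₂`-gain graph with intersecting vertex sets and
`f(H') = f(H'') = 2`, either `f(H' ∩ H'') = 4` and `f(H' ∪ H'') = 0`, or
`f(H' ∪ H'') = f(H' ∩ H'') = 2`; the latter holds iff `H' ∪ H''` is balanced.
-/

namespace ZGain

/-- A `ℤ₂`-gain graph: a finite multigraph with gains in `ℤˣ = {1, -1}` such that
parallel edges have different gains and loops have gain `-1`. -/
structure GainGraph where
  V : Type
  E : Type
  [fintV : Fintype V]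
  [fintE : Fintype E]
  [decV : DecidableEq V]
  [decE : DecidableEq E]
  ends : E → Sym2 V
  gain : E → ℤˣ
  loop_gain : ∀ e : E, (ends e).IsDiag → gain e = -1
  no_parallel : ∀ e e' : E, e ≠ e' → ends e = ends e' → gain e ≠ gain e'

attribute [instance] GainGraph.fintV GainGraph.fintE GainGraph.decV GainGraph.decE

/-- A cycle: a nonempty closed walk, recorded as a list of (edge, initial vertex)
pairs, with pairwise distinct edges and pairwise distinct vertices.  (A loop is a
cycle of length one; a pair of parallel edges is a cycle of length two.) -/
def IsCycle (G : GainGraph) (c : List (G.E × G.V)) : Prop :=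
  ∃ h : c ≠ [],
    List.Chain' (fun st t => G.ends st.1 = s(st.2, t.2)) c ∧
    G.ends (c.getLast h).1 = s((c.getLast h).2, (c.head h).2) ∧
    (c.map Prod.fst).Nodup ∧ (c.map Prod.snd).Nodup

/-- The gain of a cycle: the product of its edge gains. -/
def cycleGain (G : GainGraph) (c : List (G.E × G.V)) : ℤˣ :=
  (c.map fun st => G.gain st.1).prod

/-- An edge set is balanced if every cycle of edges in it has gain `1`. -/
def BalancedSet (G : GainGraph) (F : Finset G.E) : Prop :=
  ∀ c : List (G.E × G.V), IsCycle G c → (∀ st ∈ c, st.1 ∈ F) → cycleGain G c = 1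

/-- The endpoints of an edge, as a finset. -/
def endsFinset (G : GainGraph) (e : G.E) : Finset G.V :=
  Sym2.lift ⟨fun a b => {a, b}, fun a b => Finset.pair_comm a b⟩ (G.ends e)

/-- The set `V(F)` of vertices incident to an edge set `F`. -/
def vertsOf (G : GainGraph) (F : Finset G.E) : Finset G.V :=
  F.biUnion fun e => endsFinset G e

/-- `(2,2,0)`-gain-sparsity. -/
def Sparse220 (G : GainGraph) : Prop :=
  (∀ F : Finset G.E, F.Nonempty → BalancedSet G F →
      (F.card : ℤ) ≤ 2 * (vertsOf G F).card - 2) ∧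
    (∀ F : Finset G.E, (F.card : ℤ) ≤ 2 * (vertsOf G F).card)

/-- `(2,2,0)`-gain-tightness. -/
def Tight220 (G : GainGraph) : Prop :=
  Sparse220 G ∧ Fintype.card G.E = 2 * Fintype.card G.V

/-- `(2,2,2)`-gain-sparsity. -/
def Sparse222 (G : GainGraph) : Prop :=
  ∀ F : Finset G.E, F.Nonempty → (F.card : ℤ) ≤ 2 * (vertsOf G F).card - 2

/-- `(2,2,2)`-gain-tightness. -/
def Tight222 (G : GainGraph) : Prop :=
  Sparse222 G ∧ (Fintype.card G.E : ℤ) = 2 * Fintype.card G.V - 2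

/-- A potential for an edge set: a switching function realizing every gain in it. -/
def IsPotential (G : GainGraph) (p : G.V → ℤˣ) (F : Finset G.E) : Prop :=
  ∀ e ∈ F, ∀ u v, G.ends e = s(u, v) → G.gain e = p u * p v

lemma BalancedSet.mono {G : GainGraph} {F F' : Finset G.E} (h : BalancedSet G F')
    (hF : F ⊆ F') : BalancedSet G F :=
  fun c hc hcF => h c hc fun st hst => hF (hcF st hst)

/-- The gain of a walk telescopes along a potential. -/
lemma IsPotential.prod_gain {G : GainGraph} {p : G.V → ℤˣ} {F : Finset G.E}
    (hp : IsPotential G p F) (w : G.V) :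
    ∀ (c : List (G.E × G.V)) (h : c ≠ []),
      List.IsChain (fun st t => G.ends st.1 = s(st.2, t.2)) c →
      G.ends (c.getLast h).1 = s((c.getLast h).2, w) → (∀ st ∈ c, st.1 ∈ F) →
      (c.map fun st => G.gain st.1).prod = p (c.head h).2 * p w
  | [], h, _, _, _ => absurd rfl h
  | [a], _, _, hl, hF => by
    simpa using hp a.1 (hF a (by simp)) _ _ hl
  | a :: b :: c, _, hc, hl, hF => by
    rw [List.isChain_cons_cons] at hc
    have ih := hp.prod_gain w (b :: c) (by simp) hc.2 (by simpa using hl)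
      fun st hst => hF st (List.mem_cons_of_mem _ hst)
    have ha := hp a.1 (hF a (by simp)) _ _ hc.1
    rw [List.map_cons, List.prod_cons, ih, ha, List.head_cons, List.head_cons,
      mul_assoc, ← mul_assoc (p b.2), Int.units_mul_self, one_mul]

lemma IsPotential.balancedSet {G : GainGraph} {p : G.V → ℤˣ} {F : Finset G.E}
    (hp : IsPotential G p F) : BalancedSet G F := by
  rintro c ⟨h, hc, hl, -, -⟩ hF
  rw [cycleGain, hp.prod_gain _ c h hc hl hF, Int.units_mul_self]

/-- The simple graph underlying an edge set. -/
def underlying (G : GainGraph) (F : Finset G.E) : SimpleGraph G.V where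
  Adj u v := u ≠ v ∧ ∃ e ∈ F, G.ends e = s(u, v)
  symm := ⟨fun _ _ ⟨hne, e, he, hends⟩ => ⟨hne.symm, e, he, hends.trans Sym2.eq_swap⟩⟩
  loopless := ⟨fun _ h => h.1 rfl⟩

/-- A path in the underlying graph, followed by an edge outside the edge set, lifts to a list of
edges with their initial vertices. -/
lemma exists_lift_path {G : GainGraph} {F : Finset G.E} {e : G.E} (he : e ∉ F) {u v : G.V}
    (w : (underlying G F).Walk u v) (hw : w.IsPath) :
    ∃ c : List (G.E × G.V), (c ++ [(e, v)]).map Prod.snd = w.support ∧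
      List.IsChain (fun st t => G.ends st.1 = s(st.2, t.2)) (c ++ [(e, v)]) ∧
      ((c ++ [(e, v)]).map Prod.fst).Nodup ∧
      ∀ st ∈ c, st.1 ∈ F ∧ ∀ x ∈ G.ends st.1, x ∈ w.support := by
  induction w with
  | nil => exact ⟨[], by simp⟩
  | @cons u x v h w ih =>
    rw [SimpleGraph.Walk.cons_isPath_iff] at hw
    obtain ⟨c, hsupp, hchain, hnodup, hc⟩ := ih hw.1
    obtain ⟨d, hd, hends⟩ := h.2
    refine ⟨(d, u) :: c, ?_, ?_, ?_, ?_⟩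
    · simpa using hsupp
    · rw [List.cons_append]
      rw [List.isChain_cons]
      refine ⟨fun y hy => ?_, hchain⟩
      have hx : ((c ++ [(e, v)]).map Prod.snd).head? = some x := by
        rw [hsupp, ← SimpleGraph.Walk.cons_tail_support, List.head?_cons]
      rw [List.head?_map, Option.mem_def.1 hy] at hx
      simp only [Option.map_some, Option.some.injEq] at hx
      rw [hends, hx]
    · rw [List.cons_append, List.map_cons, List.nodup_cons]
      refine ⟨fun hmem => ?_, hnodup⟩
      obtain ⟨st, hst, hstd⟩ := List.mem_map.1 hmem
      rcases List.mem_append.1 hst with hst | hst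
      · refine hw.2 ((hc st hst).2 u ?_)
        rw [hstd, hends]
        exact Sym2.mem_mk_left _ _
      · rw [List.mem_singleton.1 hst] at hstd
        exact he ((show e = d from hstd) ▸ hd)
    · intro st hst
      rw [SimpleGraph.Walk.support_cons]
      rcases List.mem_cons.1 hst with rfl | hst
      · refine ⟨hd, fun y hy => ?_⟩
        rw [hends, Sym2.mem_iff] at hy
        rcases hy with rfl | rfl
        · simp
        · simp
      · exact ⟨(hc st hst).1, fun y hy => List.mem_cons_of_mem _ ((hc st hst).2 y hy)⟩

/-- If the endpoints of an edge are joined by a path and the edge closes up a balanced set,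
its gain is the one prescribed by a potential of the rest. -/
lemma IsPotential.gain_of_reachable {G : GainGraph} {p : G.V → ℤˣ} {F : Finset G.E} {e : G.E}
    (hp : IsPotential G p F) (he : e ∉ F) (hbal : BalancedSet G (insert e F)) {u v : G.V}
    (hends : G.ends e = s(u, v)) (hr : (underlying G F).Reachable u v) :
    G.gain e = p u * p v := by
  obtain ⟨w, hw⟩ := hr.exists_isPath
  obtain ⟨c, hsupp, hchain, hnodup, hc⟩ := exists_lift_path he w hw
  have hhead : ((c ++ [(e, v)]).head (by simp)).2 = u := by
    have hx : ((c ++ [(e, v)]).map Prod.snd).head? = some u := by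
      rw [hsupp, ← SimpleGraph.Walk.cons_tail_support, List.head?_cons]
    rw [List.head?_map, List.head?_eq_some_head (by simp)] at hx
    simpa only [Option.map_some, Option.some.injEq] using hx
  have hcyc : IsCycle G (c ++ [(e, v)]) := by
    refine ⟨by simp, hchain, ?_, hnodup, ?_⟩
    · rw [hhead, List.getLast_append_singleton, hends, Sym2.eq_swap]
    · rw [hsupp]
      exact hw.support_nodup
  have hgain := hbal _ hcyc fun st hst => by
    rcases List.mem_append.1 hst with hst | hst
    · exact Finset.mem_insert_of_mem (hc st hst).1
    · rw [List.mem_singleton.1 hst]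
      exact Finset.mem_insert_self _ _
  rw [cycleGain, List.map_append, List.prod_append] at hgain
  have hprod : (c.map fun st => G.gain st.1).prod = p u * p v := by
    rcases eq_or_ne c [] with rfl | hne
    · have huv : v = u := by simpa using hhead
      simp [huv, Int.units_mul_self]
    · rw [List.isChain_append] at hchain
      rw [hp.prod_gain v c hne hchain.1
        (hchain.2.2 _ (List.getLast_mem_getLast? hne) (e, v) (by simp))
        fun st hst => (hc st hst).1]
      rw [List.head_append_of_ne_nil hne] at hhead
      rw [hhead]
  rw [hprod, List.map_singleton, List.prod_singleton] at hgain
  rw [eq_inv_of_mul_eq_one_right hgain, Int.units_inv_eq_self]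

lemma BalancedSet.exists_isPotential {G : GainGraph} {F : Finset G.E} (h : BalancedSet G F) :
    ∃ p, IsPotential G p F := by
  classical
  induction F using Finset.induction_on with
  | empty => exact ⟨fun _ => 1, by simp [IsPotential]⟩
  | insert e F he ih =>
    obtain ⟨p, hp⟩ := ih (h.mono (Finset.subset_insert _ _))
    obtain ⟨u, v, hends⟩ : ∃ u v, G.ends e = s(u, v) := by
      induction hE : G.ends e with
      | _ u v => exact ⟨u, v, rfl⟩
    suffices H : ∃ q, IsPotential G q F ∧ G.gain e = q u * q v by
      obtain ⟨q, hq, hqe⟩ := H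
      refine ⟨q, fun d hd x y hxy => ?_⟩
      rcases Finset.mem_insert.1 hd with rfl | hd
      · rw [hends, Sym2.eq_iff] at hxy
        rcases hxy with ⟨rfl, rfl⟩ | ⟨rfl, rfl⟩
        · exact hqe
        · rw [hqe, mul_comm]
      · exact hq d hd x y hxy
    by_cases hr : (underlying G F).Reachable u v
    · exact ⟨p, hp, hp.gain_of_reachable he h hends hr⟩
    · let t : ℤˣ := G.gain e * p u * p v
      refine ⟨fun x => if (underlying G F).Reachable u x then t * p x else p x, ?_, ?_⟩
      · intro d hd x y hxy
        have hiff : (underlying G F).Reachable u x ↔ (underlying G F).Reachable u y := by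
          rcases eq_or_ne x y with rfl | hne
          · rfl
          · have hadj : (underlying G F).Adj x y := ⟨hne, d, hd, hxy⟩
            exact ⟨fun hx => hx.trans hadj.reachable, fun hy => hy.trans hadj.symm.reachable⟩
        rw [hp d hd x y hxy]
        by_cases hx : (underlying G F).Reachable u x
        · simp only [if_pos hx, if_pos (hiff.1 hx)]
          rw [mul_mul_mul_comm, Int.units_mul_self, one_mul]
        · simp only [if_neg hx, if_neg (hiff.not.1 hx)]
      · simp only [if_pos (SimpleGraph.Reachable.refl u), if_neg hr, t]
        rw [mul_right_comm (G.gain e), mul_assoc (G.gain e * p v), Int.units_mul_self, mul_one,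
          mul_assoc, Int.units_mul_self, mul_one]

lemma vertsOf_subset {G : GainGraph} {S : Finset G.V} {F : Finset G.E}
    (hS : ∀ e ∈ F, ∀ v ∈ G.ends e, v ∈ S) : vertsOf G F ⊆ S := by
  refine Finset.biUnion_subset.2 fun e he => ?_
  have h := hS e he
  unfold endsFinset
  induction hE : G.ends e with
  | _ u v =>
    rw [hE] at h
    intro x hx
    exact h x (by simpa using hx)

lemma Sparse220.two_le_of_balanced {G : GainGraph} (hG : Sparse220 G) {S : Finset G.V}
    {F : Finset G.E} (hS : ∀ e ∈ F, ∀ v ∈ G.ends e, v ∈ S) (hne : S.Nonempty)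
    (hF : BalancedSet G F) : 2 ≤ 2 * (S.card : ℤ) - F.card := by
  have hpos := hne.card_pos
  rcases F.eq_empty_or_nonempty with rfl | hFne
  · simp only [Finset.card_empty]
    omega
  · have h1 := hG.1 F hFne hF
    have h2 := Finset.card_le_card (vertsOf_subset hS)
    omega

lemma Sparse220.nonneg {G : GainGraph} (hG : Sparse220 G) {S : Finset G.V}
    {F : Finset G.E} (hS : ∀ e ∈ F, ∀ v ∈ G.ends e, v ∈ S) :
    0 ≤ 2 * (S.card : ℤ) - F.card := by
  have h1 := hG.2 F
  have h2 := Finset.card_le_card (vertsOf_subset hS)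
  omega

/-- If the vertex set of a balanced subgraph splits into two nonempty parts with no edge between
them, then `f` is at least `4`. -/
lemma Sparse220.four_le_of_split {G : GainGraph} (hG : Sparse220 G) {S : Finset G.V}
    {F : Finset G.E} (hS : ∀ e ∈ F, ∀ v ∈ G.ends e, v ∈ S) (hF : BalancedSet G F)
    (P : G.V → Prop) (hP : ∀ e ∈ F, ∀ u ∈ G.ends e, ∀ v ∈ G.ends e, P u → P v)
    (h1 : ∃ v ∈ S, P v) (h2 : ∃ v ∈ S, ¬ P v) : 4 ≤ 2 * (S.card : ℤ) - F.card := by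
  classical
  let Q : G.E → Prop := fun e => ∀ v ∈ G.ends e, P v
  have hA := hG.two_le_of_balanced (S := S.filter P) (F := F.filter Q)
    (fun e he v hv => Finset.mem_filter.2
      ⟨hS e (Finset.mem_filter.1 he).1 v hv, (Finset.mem_filter.1 he).2 v hv⟩)
    (by obtain ⟨v, hv, hPv⟩ := h1; exact ⟨v, Finset.mem_filter.2 ⟨hv, hPv⟩⟩)
    (hF.mono (Finset.filter_subset _ _))
  have hB := hG.two_le_of_balanced (S := S.filter fun v => ¬ P v) (F := F.filter fun e => ¬ Q e)
    (fun e he v hv => by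
      obtain ⟨heF, heQ⟩ := Finset.mem_filter.1 he
      exact Finset.mem_filter.2 ⟨hS e heF v hv, fun hPv => heQ fun x hx => hP e heF v hv x hx hPv⟩)
    (by obtain ⟨v, hv, hPv⟩ := h2; exact ⟨v, Finset.mem_filter.2 ⟨hv, hPv⟩⟩)
    (hF.mono (Finset.filter_subset _ _))
  have hcS := Finset.card_filter_add_card_filter_not (s := S) P
  have hcF := Finset.card_filter_add_card_filter_not (s := F) Q
  omega

/-- Potentials of two subgraphs that agree up to a constant sign on the common vertices glue. -/
lemma balancedSet_union_of_potentials {G : GainGraph} {S T : Finset G.V} {E F : Finset G.E}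
    (hS : ∀ e ∈ E, ∀ v ∈ G.ends e, v ∈ S) (hT : ∀ e ∈ F, ∀ v ∈ G.ends e, v ∈ T)
    {p q : G.V → ℤˣ} (hp : IsPotential G p E) (hq : IsPotential G q F) (t : ℤˣ)
    (h : ∀ v ∈ S ∩ T, p v = t * q v) : BalancedSet G (E ∪ F) := by
  apply IsPotential.balancedSet (p := fun v => if v ∈ S then p v else t * q v)
  intro e he u v huv
  have hu : u ∈ G.ends e := huv ▸ Sym2.mem_mk_left u v
  have hv : v ∈ G.ends e := huv ▸ Sym2.mem_mk_right u v
  by_cases heE : e ∈ E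
  · simp only [if_pos (hS e heE u hu), if_pos (hS e heE v hv)]
    exact hp e heE u v huv
  · have heF := (Finset.mem_union.1 he).resolve_left heE
    have key : ∀ x ∈ T, (if x ∈ S then p x else t * q x) = t * q x := by
      intro x hx
      split_ifs with hxS
      · exact h x (Finset.mem_inter.2 ⟨hxS, hx⟩)
      · rfl
    simp only [key u (hT e heF u hu), key v (hT e heF v hv)]
    rw [hq e heF u v huv, mul_mul_mul_comm, Int.units_mul_self, one_mul]

theorem union_inter_f (G : GainGraph)
    (htight : Tight220 G)
    (SV' SV'' : Finset G.V) (SE' SE'' : Finset G.E)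
    (hsub' : ∀ e ∈ SE', ∀ v ∈ G.ends e, v ∈ SV')
    (hsub'' : ∀ e ∈ SE'', ∀ v ∈ G.ends e, v ∈ SV'')
    (hbal' : BalancedSet G SE')
    (hbal'' : BalancedSet G SE'')
    (hmeet : (SV' ∩ SV'').Nonempty)
    (hf' : 2 * (SV'.card : ℤ) - SE'.card = 2)
    (hf'' : 2 * (SV''.card : ℤ) - SE''.card = 2) :
    ((2 * ((SV' ∩ SV'').card : ℤ) - ((SE' ∩ SE'').card : ℤ) = 4 ∧
        2 * ((SV' ∪ SV'').card : ℤ) - ((SE' ∪ SE'').card : ℤ) = 0) ∨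
      (2 * ((SV' ∪ SV'').card : ℤ) - ((SE' ∪ SE'').card : ℤ) = 2 ∧
        2 * ((SV' ∩ SV'').card : ℤ) - ((SE' ∩ SE'').card : ℤ) = 2)) ∧
    ((2 * ((SV' ∪ SV'').card : ℤ) - ((SE' ∪ SE'').card : ℤ) = 2 ∧
        2 * ((SV' ∩ SV'').card : ℤ) - ((SE' ∩ SE'').card : ℤ) = 2) ↔
      BalancedSet G (SE' ∪ SE'')) := by
  have hG := htight.1
  have hsubI : ∀ e ∈ SE' ∩ SE'', ∀ v ∈ G.ends e, v ∈ SV' ∩ SV'' := fun e he v hv =>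
    Finset.mem_inter.2 ⟨hsub' e (Finset.mem_inter.1 he).1 v hv,
      hsub'' e (Finset.mem_inter.1 he).2 v hv⟩
  have hsubU : ∀ e ∈ SE' ∪ SE'', ∀ v ∈ G.ends e, v ∈ SV' ∪ SV'' := fun e he v hv =>
    Finset.mem_union.2 ((Finset.mem_union.1 he).imp (hsub' e · v hv) (hsub'' e · v hv))
  have hbalI : BalancedSet G (SE' ∩ SE'') := hbal'.mono Finset.inter_subset_left
  have hneU : (SV' ∪ SV'').Nonempty := hmeet.mono fun v hv =>
    Finset.mem_union_left _ (Finset.mem_inter.1 hv).1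
  have hI := hG.two_le_of_balanced hsubI hmeet hbalI
  have hU := hG.nonneg hsubU
  have hUbal := hG.two_le_of_balanced hsubU hneU
  have hcV := Finset.card_union_add_card_inter SV' SV''
  have hcE := Finset.card_union_add_card_inter SE' SE''
  have hdich : BalancedSet G (SE' ∪ SE'') ∨
      4 ≤ 2 * ((SV' ∩ SV'').card : ℤ) - ((SE' ∩ SE'').card : ℤ) := by
    obtain ⟨p, hp⟩ := hbal'.exists_isPotential
    obtain ⟨q, hq⟩ := hbal''.exists_isPotential
    by_cases h1 : ∃ v ∈ SV' ∩ SV'', p v = q v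
    · by_cases h2 : ∃ v ∈ SV' ∩ SV'', ¬ p v = q v
      · right
        refine hG.four_le_of_split hsubI hbalI (fun v => p v = q v) ?_ h1 h2
        intro e he u hu v hv huv
        obtain ⟨hE', hE''⟩ := Finset.mem_inter.1 he
        rcases eq_or_ne u v with rfl | hne
        · exact huv
        · have hends : G.ends e = s(u, v) := (Sym2.mem_and_mem_iff hne).1 ⟨hu, hv⟩
          have h := (hp e hE' u v hends).symm.trans (hq e hE'' u v hends)
          rw [huv] at h
          exact mul_left_cancel h
      · left
        push Not at h2
        exact balancedSet_union_of_potentials hsub' hsub'' hp hq 1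
          fun v hv => by rw [h2 v hv, one_mul]
    · left
      push Not at h1
      exact balancedSet_union_of_potentials hsub' hsub'' hp hq (-1)
        fun v hv => by rw [Int.units_ne_iff_eq_neg.1 (h1 v hv), neg_one_mul]
  constructor
  · rcases hdich with hb | h4
    · have := hUbal hb
      right
      omega
    · left
      omega
  · constructor
    · rintro ⟨-, h⟩
      exact hdich.resolve_right (by omega)
    · intro hb
      have := hUbal hb
      omega

end ZGain
end
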